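/- arXiv:1508.00232 — 3 statements merged into one kernel-verified Lean document; each statement's English description precedes it below -/
import Mathlib

section
/- Let γ > 0. Consider the statements: (i) Σ_K is mean square stable and ‖Σ_K‖∞² < γ; (ii) Σ̄_K is mean square stable and ‖Σ̄_K‖∞² < γ, where the H∞ norm of Σ̄_K is defined analogously using θ in place of r̄ and disturbances adapted to the filtration generated by θ; (iii) there exist matrices G_χ, H_χ, X_χ, Z_{χ,χ'} ∈ ℝ^{n×n} (χ, χ' ∈ 𝔛) such that for all χ, χ' ∈ 𝔛 the symmetric block matrix with diagonal blocks G_χ + G_χᵀ − X_χ, γ I_q, H_χ + H_χᵀ − F̄_χ(Z), I_ℓ, with sub-diagonal blocks (3,1) = A_{K,χ} G_χ, (3,2) = E_{K,χ}, (4,1) = C_{K,χ} G_χ, all other off-diagonal blocks zero (and the corresponding transposed blocks above the diagonal), is positive definite, and the symmetric block matrix [[Z_{χ,χ'}, H_χᵀ],[H_χ, X_{χ'}]] is positive definite. Then (i) and (ii) are equivalent, and (iii) implies both (i) and (ii). -/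
open MeasureTheory ProbabilityTheory Matrix

noncomputable section

/-- The state space `[N] × [M] × [N] × [T]` of the extended process `r̄`.
`Fin N`, `Fin M`, `Fin T` play the roles of `[N] = {1,…,N}`, `[M]`, `[T]`
(with `Fin T` being the 0-indexed version of `[T] = {1,…,T}`, i.e. `δ ∈ [T]`
corresponds to `δ - 1 : Fin T`). -/
abbrev XT (NN MM T : ℕ) : Type := Fin NN × Fin MM × Fin NN × Fin T

/-- `X` is a time-homogeneous Markov chain with transition probability matrix `P`:
for every `k`, every state `j` and every sequence of states `i`,
`Pr(X(k+1) = j ∧ X(l) = i l for all l ≤ k) = P (i k) j * Pr(X(l) = i l for all l ≤ k)`. -/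
def IsMarkovChain {Ω : Type} {_mΩ : MeasurableSpace Ω} (μ : Measure Ω) {S : Type}
    (X : ℕ → Ω → S) (P : S → S → ℝ) : Prop :=
  ∀ (k : ℕ) (j : S) (i : ℕ → S),
    (μ {ω | X (k + 1) ω = j ∧ ∀ l ≤ k, X l ω = i l}).toReal
      = P (i k) j * (μ {ω | ∀ l ≤ k, X l ω = i l}).toReal

/-- `⌊m⌋_T`, the unique element of `{0,…,T-1}` congruent to `m` modulo `T`, as `Fin T`. -/
def intToFin (T : ℕ) [NeZero T] (a : ℤ) : Fin T :=
  ⟨(a % (T : ℤ)).toNat, by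
    have hT : 0 < (T : ℤ) := by
      exact_mod_cast Nat.pos_of_ne_zero (NeZero.ne T)
    have h1 : 0 ≤ a % (T : ℤ) := Int.emod_nonneg a (by omega)
    have h2 : a % (T : ℤ) < (T : ℤ) := Int.emod_lt_of_pos a hT
    omega⟩

-- `τ(k)`: the most recent observation time `≤ k` (i.e. the largest `j ≤ k` with
-- `f(s(j)) = 1`), or `τ₀` if no observation has occurred up to time `k` (`k < t₀`).
open Classical in
def tauZ {Ω : Type} {MM : ℕ} (s : ℕ → Ω → Fin MM) (f : Fin MM → Bool)
    (τ₀ : ℤ) (k : ℕ) (ω : Ω) : ℤ :=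
  if ∃ j ≤ k, f (s j ω) = true
  then ((Nat.findGreatest (fun j => f (s j ω) = true) k : ℕ) : ℤ)
  else τ₀

-- `σ(k) = r(τ(k))` if an observation occurred by time `k` (i.e. `k ≥ t₀`), else `σ₀`.
open Classical in
def sigmaProc {Ω : Type} {NN MM : ℕ} (r : ℕ → Ω → Fin NN) (s : ℕ → Ω → Fin MM)
    (f : Fin MM → Bool) (σ₀ : Fin NN) (k : ℕ) (ω : Ω) : Fin NN :=
  if ∃ j ≤ k, f (s j ω) = true
  then r (Nat.findGreatest (fun j => f (s j ω) = true) k) ω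
  else σ₀

/-- `ρ(k) = ⌊k - τ(k)⌋_T + 1 ∈ [T]`, represented 0-indexed as `⌊k - τ(k)⌋_T : Fin T`. -/
def rhoProc {Ω : Type} {MM T : ℕ} [NeZero T] (s : ℕ → Ω → Fin MM) (f : Fin MM → Bool)
    (τ₀ : ℤ) (k : ℕ) (ω : Ω) : Fin T :=
  intToFin T ((k : ℤ) - tauZ s f τ₀ k ω)

/-- The extended process `r̄(k) = (r(k), s(k), σ(k), ρ(k))`. -/
def rbarProc {Ω : Type} {NN MM T : ℕ} [NeZero T] (r : ℕ → Ω → Fin NN)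
    (s : ℕ → Ω → Fin MM) (f : Fin MM → Bool) (τ₀ : ℤ) (σ₀ : Fin NN)
    (k : ℕ) (ω : Ω) : XT NN MM T :=
  (r k ω, s k ω, sigmaProc r s f σ₀ k ω, rhoProc s f τ₀ k ω)

/-- Membership in `𝔛`: if `f(β) = 1` then `α = γ` and `δ = 1` (0-indexed: `δ = 0`). -/
def inX {NN MM T : ℕ} [NeZero T] (f : Fin MM → Bool) (χ : XT NN MM T) : Prop :=
  f χ.2.1 = true → χ.1 = χ.2.2.1 ∧ χ.2.2.2 = 0

/-- The transition probabilities `p̄_{χχ'}` of the extended chain. The condition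
`⌊δ' - δ - 1⌋_T = 0` for `δ, δ' ∈ [T]` is, in 0-indexed form, `δ' = δ + 1` in `Fin T`. -/
def pbar {NN MM T : ℕ} [NeZero T] (P : Matrix (Fin NN) (Fin NN) ℝ)
    (Q : Matrix (Fin MM) (Fin MM) ℝ) (f : Fin MM → Bool) (χ χ' : XT NN MM T) : ℝ :=
  (if f χ'.2.1 = true
    then (if χ'.1 = χ'.2.2.1 ∧ χ'.2.2.2 = 0 then (1 : ℝ) else 0)
    else (if χ'.2.2.1 = χ.2.2.1 ∧ χ'.2.2.2 = χ.2.2.2 + 1 then (1 : ℝ) else 0))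
  * P χ.1 χ'.1 * Q χ.2.1 χ'.2.1

/-- The state trajectory of the closed-loop system
`x(k+1) = A(mode(k)) x(k) + E(mode(k)) w(k)`, `x(0) = x₀`. -/
def traj {Ω S : Type} {n q : ℕ}
    (Amat : S → Matrix (Fin n) (Fin n) ℝ) (Emat : S → Matrix (Fin n) (Fin q) ℝ)
    (mode : ℕ → Ω → S) (w : ℕ → Ω → Fin q → ℝ) (x0 : Fin n → ℝ) : ℕ → Ω → Fin n → ℝ
  | 0, _ => x0
  | (k + 1), ω =>
      (Amat (mode k ω)).mulVec (traj Amat Emat mode w x0 k ω)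
        + (Emat (mode k ω)).mulVec (w k ω)

/-- `A_{K,χ} = A_α + B_α K_{γ,δ}`. -/
def AKmat {NN MM T n m : ℕ} (A : Fin NN → Matrix (Fin n) (Fin n) ℝ)
    (B : Fin NN → Matrix (Fin n) (Fin m) ℝ)
    (K : Fin NN → Fin T → Matrix (Fin m) (Fin n) ℝ) (χ : XT NN MM T) :
    Matrix (Fin n) (Fin n) ℝ :=
  A χ.1 + B χ.1 * K χ.2.2.1 χ.2.2.2

/-- `C_{K,χ} = C_α + D_α K_{γ,δ}`. -/
def CKmat {NN MM T n m ℓ : ℕ} (C : Fin NN → Matrix (Fin ℓ) (Fin n) ℝ)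
    (D : Fin NN → Matrix (Fin ℓ) (Fin m) ℝ)
    (K : Fin NN → Fin T → Matrix (Fin m) (Fin n) ℝ) (χ : XT NN MM T) :
    Matrix (Fin ℓ) (Fin n) ℝ :=
  C χ.1 + D χ.1 * K χ.2.2.1 χ.2.2.2

/-- Squared Euclidean norm of a vector, as an extended nonnegative real. -/
def sqE {d : ℕ} (v : Fin d → ℝ) : ENNReal := ENNReal.ofReal (∑ i, (v i) ^ 2)

-- The operator `D̄_χ(R) = ∑_{χ' ∈ 𝔛} p̄_{χ'χ} R_{χ'}`.
open Classical in
def Dop {NN MM T n : ℕ} [NeZero T] (P : Matrix (Fin NN) (Fin NN) ℝ)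
    (Q : Matrix (Fin MM) (Fin MM) ℝ) (f : Fin MM → Bool)
    (R : XT NN MM T → Matrix (Fin n) (Fin n) ℝ) (χ : XT NN MM T) :
    Matrix (Fin n) (Fin n) ℝ :=
  ∑ χ' : XT NN MM T, if inX f χ' then pbar P Q f χ' χ • R χ' else 0

-- The operator `F̄_χ(Z) = ∑_{χ' ∈ 𝔛} p̄_{χχ'} Z_{χ,χ'}`.
open Classical in
def Fop {NN MM T n : ℕ} [NeZero T] (P : Matrix (Fin NN) (Fin NN) ℝ)
    (Q : Matrix (Fin MM) (Fin MM) ℝ) (f : Fin MM → Bool)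
    (Z : XT NN MM T → XT NN MM T → Matrix (Fin n) (Fin n) ℝ) (χ : XT NN MM T) :
    Matrix (Fin n) (Fin n) ℝ :=
  ∑ χ' : XT NN MM T, if inX f χ' then pbar P Q f χ χ' • Z χ χ' else 0

/-- A pair `(γ,δ) ∈ [N] × [T]` is admissible if `(α,β,γ,δ) ∈ 𝔛` for some `α, β`. -/
def Admissible {NN MM T : ℕ} [NeZero T] (f : Fin MM → Bool) (g : Fin NN) (d : Fin T) : Prop :=
  ∃ (α : Fin NN) (β : Fin MM), inX (T := T) f (α, β, g, d)

/-- A realization, on some probability space, of the pair of independent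
time-homogeneous Markov chains `(r, s)` with transition matrices `P` and `Q`. -/
structure MJLSReal (NN MM : ℕ) (P : Matrix (Fin NN) (Fin NN) ℝ)
    (Q : Matrix (Fin MM) (Fin MM) ℝ) : Type 1 where
  Ω : Type
  inst : MeasurableSpace Ω
  μ : @Measure Ω inst
  prob : IsProbabilityMeasure μ
  r : ℕ → Ω → Fin NN
  s : ℕ → Ω → Fin MM
  meas_r : ∀ k, Measurable[inst] (r k)
  meas_s : ∀ k, Measurable[inst] (s k)
  markov_r : IsMarkovChain μ r fun i j => P i j
  markov_s : IsMarkovChain μ s fun i j => Q i j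
  indep : IndepFun (fun ω l => r l ω) (fun ω l => s l ω) μ

/-- A realization, on some probability space, of a time-homogeneous Markov chain `θ`
taking values in `𝔛` with transition probabilities `p̄`. -/
structure ThetaReal (NN MM T : ℕ) [NeZero T] (P : Matrix (Fin NN) (Fin NN) ℝ)
    (Q : Matrix (Fin MM) (Fin MM) ℝ) (f : Fin MM → Bool) : Type 1 where
  Ω : Type
  inst : MeasurableSpace Ω
  μ : @Measure Ω inst
  prob : IsProbabilityMeasure μ
  θ : ℕ → Ω → XT NN MM T
  meas : ∀ k, Measurable[inst] (θ k)
  mem : ∀ k ω, inX f (θ k ω)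
  markov : IsMarkovChain μ θ (pbar P Q f)

/-- Mean square stability of the closed-loop system `Σ_K`: there are `c > 0` and
`λ ∈ [0,1)` such that for every realization, every deterministic initialization
(`r(0) = r₀`, `s(0) = s₀` a.s., together with `σ₀` and `τ₀ ≤ 0`, so that `r̄(0)`
is a deterministic element of `𝔛`), every `x₀` and every `k`,
`E[‖x(k)‖²] ≤ c λ^k ‖x₀‖²` (with `w ≡ 0`). -/
def MeanSquareStable {NN MM T n m q : ℕ} [NeZero T]
    (P : Matrix (Fin NN) (Fin NN) ℝ) (Qm : Matrix (Fin MM) (Fin MM) ℝ) (f : Fin MM → Bool)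
    (A : Fin NN → Matrix (Fin n) (Fin n) ℝ) (B : Fin NN → Matrix (Fin n) (Fin m) ℝ)
    (E : Fin NN → Matrix (Fin n) (Fin q) ℝ)
    (K : Fin NN → Fin T → Matrix (Fin m) (Fin n) ℝ) : Prop :=
  ∃ c : ℝ, 0 < c ∧ ∃ lam : ℝ, 0 ≤ lam ∧ lam < 1 ∧
    ∀ (S : MJLSReal NN MM P Qm) (τ₀ : ℤ), τ₀ ≤ 0 →
      ∀ (σ₀ r₀ : Fin NN) (s₀ : Fin MM),
        (∀ᵐ ω ∂S.μ, S.r 0 ω = r₀ ∧ S.s 0 ω = s₀) →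
        ∀ (x0 : Fin n → ℝ) (k : ℕ),
          (∫⁻ ω, sqE (traj (AKmat A B K) (fun χ => E χ.1)
              (rbarProc S.r S.s f τ₀ σ₀) (fun _ _ => 0) x0 k ω) ∂S.μ)
            ≤ ENNReal.ofReal (c * lam ^ k * ∑ i, (x0 i) ^ 2)

/-- Mean square stability of `Σ̄_K` (the system driven by the chain `θ`). -/
def MeanSquareStableBar {NN MM T n m q : ℕ} [NeZero T]
    (P : Matrix (Fin NN) (Fin NN) ℝ) (Qm : Matrix (Fin MM) (Fin MM) ℝ) (f : Fin MM → Bool)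
    (A : Fin NN → Matrix (Fin n) (Fin n) ℝ) (B : Fin NN → Matrix (Fin n) (Fin m) ℝ)
    (E : Fin NN → Matrix (Fin n) (Fin q) ℝ)
    (K : Fin NN → Fin T → Matrix (Fin m) (Fin n) ℝ) : Prop :=
  ∃ c : ℝ, 0 < c ∧ ∃ lam : ℝ, 0 ≤ lam ∧ lam < 1 ∧
    ∀ (S : ThetaReal NN MM T P Qm f) (χ : XT NN MM T), inX f χ →
      (∀ᵐ ω ∂S.μ, S.θ 0 ω = χ) →
      ∀ (x0 : Fin n → ℝ) (k : ℕ),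
        (∫⁻ ω, sqE (traj (AKmat A B K) (fun χ' => E χ'.1) S.θ (fun _ _ => 0) x0 k ω) ∂S.μ)
          ≤ ENNReal.ofReal (c * lam ^ k * ∑ i, (x0 i) ^ 2)

/-- The impulse disturbance `w = e_i φ`, i.e. `w(0) = e_i` and `w(k) = 0` for `k ≥ 1`. -/
def impulse {Ω : Type} (q : ℕ) (i : Fin q) : ℕ → Ω → Fin q → ℝ :=
  fun k _ j => if k = 0 ∧ j = i then 1 else 0

/-- `∑_k E[‖z(k; 0, χ, e_i φ)‖²]` for `Σ_K` on a given realization with data `(τ₀, σ₀)`. -/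
def H2TermSigma {NN MM T n m q ℓ : ℕ} [NeZero T]
    {P : Matrix (Fin NN) (Fin NN) ℝ} {Qm : Matrix (Fin MM) (Fin MM) ℝ}
    (S : MJLSReal NN MM P Qm) (f : Fin MM → Bool) (τ₀ : ℤ) (σ₀ : Fin NN)
    (A : Fin NN → Matrix (Fin n) (Fin n) ℝ) (B : Fin NN → Matrix (Fin n) (Fin m) ℝ)
    (C : Fin NN → Matrix (Fin ℓ) (Fin n) ℝ) (D : Fin NN → Matrix (Fin ℓ) (Fin m) ℝ)
    (E : Fin NN → Matrix (Fin n) (Fin q) ℝ)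
    (K : Fin NN → Fin T → Matrix (Fin m) (Fin n) ℝ) (i : Fin q) : ENNReal :=
  ∑' k : ℕ, ∫⁻ ω, sqE ((CKmat C D K (rbarProc S.r S.s f τ₀ σ₀ k ω)).mulVec
      (traj (AKmat A B K) (fun χ => E χ.1) (rbarProc S.r S.s f τ₀ σ₀)
        (impulse q i) 0 k ω)) ∂S.μ

-- `‖Σ_K‖₂² < γ`, where `‖Σ_K‖₂² = ∑_{i=1}^q ∑_{χ ∈ 𝔛} μ̄(χ) ‖z(⬝;0,χ,e_iφ)‖₂²` and the
-- expectations are over arbitrary realizations with deterministic initialization `r̄(0) = χ`.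
open Classical in
def H2SqLtSigma {NN MM T n m q ℓ : ℕ} [NeZero T]
    (P : Matrix (Fin NN) (Fin NN) ℝ) (Qm : Matrix (Fin MM) (Fin MM) ℝ) (f : Fin MM → Bool)
    (A : Fin NN → Matrix (Fin n) (Fin n) ℝ) (B : Fin NN → Matrix (Fin n) (Fin m) ℝ)
    (C : Fin NN → Matrix (Fin ℓ) (Fin n) ℝ) (D : Fin NN → Matrix (Fin ℓ) (Fin m) ℝ)
    (E : Fin NN → Matrix (Fin n) (Fin q) ℝ)
    (K : Fin NN → Fin T → Matrix (Fin m) (Fin n) ℝ)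
    (μbar : XT NN MM T → ℝ) (γ : ℝ) : Prop :=
  ∀ (S : Fin q → XT NN MM T → MJLSReal NN MM P Qm)
    (τ : Fin q → XT NN MM T → ℤ) (σv : Fin q → XT NN MM T → Fin NN),
    (∀ i χ, inX f χ → τ i χ ≤ 0 ∧
        (∀ᵐ ω ∂(S i χ).μ, rbarProc (S i χ).r (S i χ).s f (τ i χ) (σv i χ) 0 ω = χ)) →
    (∑ i : Fin q, ∑ χ : XT NN MM T,
        if inX f χ
        then ENNReal.ofReal (μbar χ) * H2TermSigma (S i χ) f (τ i χ) (σv i χ) A B C D E K i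
        else 0)
      < ENNReal.ofReal γ

/-- `∑_k E[‖z̄(k; 0, χ, e_i φ)‖²]` for `Σ̄_K` on a given realization of `θ`. -/
def H2TermBar {NN MM T n m q ℓ : ℕ} [NeZero T]
    {P : Matrix (Fin NN) (Fin NN) ℝ} {Qm : Matrix (Fin MM) (Fin MM) ℝ} {f : Fin MM → Bool}
    (S : ThetaReal NN MM T P Qm f)
    (A : Fin NN → Matrix (Fin n) (Fin n) ℝ) (B : Fin NN → Matrix (Fin n) (Fin m) ℝ)
    (C : Fin NN → Matrix (Fin ℓ) (Fin n) ℝ) (D : Fin NN → Matrix (Fin ℓ) (Fin m) ℝ)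
    (E : Fin NN → Matrix (Fin n) (Fin q) ℝ)
    (K : Fin NN → Fin T → Matrix (Fin m) (Fin n) ℝ) (i : Fin q) : ENNReal :=
  ∑' k : ℕ, ∫⁻ ω, sqE ((CKmat C D K (S.θ k ω)).mulVec
      (traj (AKmat A B K) (fun χ => E χ.1) S.θ (impulse q i) 0 k ω)) ∂S.μ

-- `‖Σ̄_K‖₂² < γ` (the `H₂` norm of `Σ̄_K`, defined with `θ` in place of `r̄`).
open Classical in
def H2SqLtBar {NN MM T n m q ℓ : ℕ} [NeZero T]
    (P : Matrix (Fin NN) (Fin NN) ℝ) (Qm : Matrix (Fin MM) (Fin MM) ℝ) (f : Fin MM → Bool)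
    (A : Fin NN → Matrix (Fin n) (Fin n) ℝ) (B : Fin NN → Matrix (Fin n) (Fin m) ℝ)
    (C : Fin NN → Matrix (Fin ℓ) (Fin n) ℝ) (D : Fin NN → Matrix (Fin ℓ) (Fin m) ℝ)
    (E : Fin NN → Matrix (Fin n) (Fin q) ℝ)
    (K : Fin NN → Fin T → Matrix (Fin m) (Fin n) ℝ)
    (μbar : XT NN MM T → ℝ) (γ : ℝ) : Prop :=
  ∀ (S : Fin q → XT NN MM T → ThetaReal NN MM T P Qm f),
    (∀ i χ, inX f χ → (∀ᵐ ω ∂(S i χ).μ, (S i χ).θ 0 ω = χ)) →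
    (∑ i : Fin q, ∑ χ : XT NN MM T,
        if inX f χ
        then ENNReal.ofReal (μbar χ) * H2TermBar (S i χ) A B C D E K i
        else 0)
      < ENNReal.ofReal γ

/-- The σ-algebra `Θ_k` generated by `r(0), s(0), …, r(k), s(k)`, for a realization. -/
def sigFiltSigma {NN MM : ℕ} {P : Matrix (Fin NN) (Fin NN) ℝ}
    {Q : Matrix (Fin MM) (Fin MM) ℝ} (S : MJLSReal NN MM P Q) (k : ℕ) :
    MeasurableSpace S.Ω :=
  ⨆ j ∈ Finset.range (k + 1),
    (MeasurableSpace.comap (S.r j) inferInstance ⊔ MeasurableSpace.comap (S.s j) inferInstance)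

/-- The σ-algebra generated by `θ(0), …, θ(k)`, for a realization of `θ`. -/
def sigFiltBar {NN MM T : ℕ} [NeZero T] {P : Matrix (Fin NN) (Fin NN) ℝ}
    {Q : Matrix (Fin MM) (Fin MM) ℝ} {f : Fin MM → Bool} (S : ThetaReal NN MM T P Q f)
    (k : ℕ) : MeasurableSpace S.Ω :=
  ⨆ j ∈ Finset.range (k + 1), MeasurableSpace.comap (S.θ j) inferInstance

/-- `Σ_K` satisfies `‖Σ_K‖∞² < γ`: there is `0 ≤ c < γ` such that `‖z‖₂² ≤ c ‖w‖₂²`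
for every realization, every deterministic initialization `r̄(0) = r̄₀ ∈ 𝔛`, and
every nonzero `w ∈ ℓ²(ℝ^q)` adapted to `(Θ_k)_k` (with `x₀ = 0`). -/
def HinfSqLtSigma {NN MM T n m q ℓ : ℕ} [NeZero T]
    (P : Matrix (Fin NN) (Fin NN) ℝ) (Qm : Matrix (Fin MM) (Fin MM) ℝ) (f : Fin MM → Bool)
    (A : Fin NN → Matrix (Fin n) (Fin n) ℝ) (B : Fin NN → Matrix (Fin n) (Fin m) ℝ)
    (C : Fin NN → Matrix (Fin ℓ) (Fin n) ℝ) (D : Fin NN → Matrix (Fin ℓ) (Fin m) ℝ)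
    (E : Fin NN → Matrix (Fin n) (Fin q) ℝ)
    (K : Fin NN → Fin T → Matrix (Fin m) (Fin n) ℝ) (γ : ℝ) : Prop :=
  ∃ c : ℝ, 0 ≤ c ∧ c < γ ∧
    ∀ (S : MJLSReal NN MM P Qm) (τ₀ : ℤ), τ₀ ≤ 0 → ∀ (σ₀ : Fin NN) (χ : XT NN MM T),
      inX f χ → (∀ᵐ ω ∂S.μ, rbarProc S.r S.s f τ₀ σ₀ 0 ω = χ) →
      ∀ (w : ℕ → S.Ω → Fin q → ℝ),
        (∀ k, Measurable[sigFiltSigma S k] (w k)) →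
        0 < (∑' k : ℕ, ∫⁻ ω, sqE (w k ω) ∂S.μ) →
        (∑' k : ℕ, ∫⁻ ω, sqE (w k ω) ∂S.μ) ≠ ⊤ →
        (∑' k : ℕ, ∫⁻ ω, sqE ((CKmat C D K (rbarProc S.r S.s f τ₀ σ₀ k ω)).mulVec
            (traj (AKmat A B K) (fun χ' => E χ'.1) (rbarProc S.r S.s f τ₀ σ₀) w 0 k ω)) ∂S.μ)
          ≤ ENNReal.ofReal c * (∑' k : ℕ, ∫⁻ ω, sqE (w k ω) ∂S.μ)

/-- `Σ̄_K` satisfies `‖Σ̄_K‖∞² < γ` (disturbances adapted to the filtration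
generated by `θ`). -/
def HinfSqLtBar {NN MM T n m q ℓ : ℕ} [NeZero T]
    (P : Matrix (Fin NN) (Fin NN) ℝ) (Qm : Matrix (Fin MM) (Fin MM) ℝ) (f : Fin MM → Bool)
    (A : Fin NN → Matrix (Fin n) (Fin n) ℝ) (B : Fin NN → Matrix (Fin n) (Fin m) ℝ)
    (C : Fin NN → Matrix (Fin ℓ) (Fin n) ℝ) (D : Fin NN → Matrix (Fin ℓ) (Fin m) ℝ)
    (E : Fin NN → Matrix (Fin n) (Fin q) ℝ)
    (K : Fin NN → Fin T → Matrix (Fin m) (Fin n) ℝ) (γ : ℝ) : Prop :=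
  ∃ c : ℝ, 0 ≤ c ∧ c < γ ∧
    ∀ (S : ThetaReal NN MM T P Qm f) (χ : XT NN MM T),
      inX f χ → (∀ᵐ ω ∂S.μ, S.θ 0 ω = χ) →
      ∀ (w : ℕ → S.Ω → Fin q → ℝ),
        (∀ k, Measurable[sigFiltBar S k] (w k)) →
        0 < (∑' k : ℕ, ∫⁻ ω, sqE (w k ω) ∂S.μ) →
        (∑' k : ℕ, ∫⁻ ω, sqE (w k ω) ∂S.μ) ≠ ⊤ →
        (∑' k : ℕ, ∫⁻ ω, sqE ((CKmat C D K (S.θ k ω)).mulVec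
            (traj (AKmat A B K) (fun χ' => E χ'.1) S.θ w 0 k ω)) ∂S.μ)
          ≤ ENNReal.ofReal c * (∑' k : ℕ, ∫⁻ ω, sqE (w k ω) ∂S.μ)

/-- The symmetric 4×4 block matrix appearing in the `H∞` LMI, with diagonal blocks
`D1, γ I_q, D3, I_ℓ`, sub-diagonal blocks `(3,1) = B31`, `(3,2) = B32`, `(4,1) = B41`,
the corresponding transposed blocks above the diagonal, and zeros elsewhere. -/
def hinfBlock {n q ℓ : ℕ} (γ : ℝ) (D1 D3 : Matrix (Fin n) (Fin n) ℝ)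
    (B31 : Matrix (Fin n) (Fin n) ℝ) (B32 : Matrix (Fin n) (Fin q) ℝ)
    (B41 : Matrix (Fin ℓ) (Fin n) ℝ) :
    Matrix ((Fin n ⊕ Fin q) ⊕ (Fin n ⊕ Fin ℓ)) ((Fin n ⊕ Fin q) ⊕ (Fin n ⊕ Fin ℓ)) ℝ :=
  Matrix.fromBlocks
    (Matrix.fromBlocks D1 0 0 (γ • (1 : Matrix (Fin q) (Fin q) ℝ)))
    (Matrix.fromBlocks B31ᵀ B41ᵀ B32ᵀ 0)
    (Matrix.fromBlocks B31 B32 B41 0)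
    (Matrix.fromBlocks D3 0 0 (1 : Matrix (Fin ℓ) (Fin ℓ) ℝ))

/-- `y` depends on `ω` only through the history of `X` up to time `k`. -/
def HistConst {Ω S α : Type} (X : ℕ → Ω → S) (k : ℕ) (y : Ω → α) : Prop :=
  ∀ ω ω', (∀ l ≤ k, X l ω = X l ω') → y ω = y ω'

/-- The history of `X` up to time `k`. -/
def histOf {Ω S : Type} (X : ℕ → Ω → S) (k : ℕ) (ω : Ω) : Fin (k + 1) → S := fun l => X l ω

lemma histOf_eq_iff {Ω S : Type} (X : ℕ → Ω → S) (k : ℕ) (ω ω' : Ω) :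
    histOf X k ω = histOf X k ω' ↔ ∀ l ≤ k, X l ω = X l ω' := by
  constructor
  · intro h l hl
    exact congrFun h ⟨l, by omega⟩
  · intro h
    funext l
    exact h l (by omega)

lemma HistConst.mono {Ω S α : Type} {X : ℕ → Ω → S} {k k' : ℕ} {y : Ω → α}
    (h : HistConst X k y) (hk : k ≤ k') : HistConst X k' y :=
  fun ω ω' H => h ω ω' fun l hl => H l (hl.trans hk)

lemma HistConst.factor {Ω S α : Type} [Nonempty α] {X : ℕ → Ω → S} {k : ℕ} {y : Ω → α}
    (h : HistConst X k y) : ∃ Y : (Fin (k + 1) → S) → α, ∀ ω, y ω = Y (histOf X k ω) := by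
  have h1 : Function.FactorsThrough y (histOf X k) := fun ω ω' H =>
    h ω ω' ((histOf_eq_iff X k ω ω').1 H)
  obtain ⟨Y, hY⟩ := (Function.factorsThrough_iff y).1 h1
  exact ⟨Y, fun ω => congrFun hY ω⟩

lemma histOf_measurable {Ω S : Type} [MeasurableSpace S] {mm : MeasurableSpace Ω}
    {X : ℕ → Ω → S} {k : ℕ} (hX : ∀ l ≤ k, Measurable (X l)) : Measurable (histOf X k) :=
  measurable_pi_lambda _ fun l => hX l (by omega)

lemma HistConst.measurable {Ω S α : Type} [Finite S] [MeasurableSpace S]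
    [MeasurableSingletonClass S] [MeasurableSpace α] {mm : MeasurableSpace Ω}
    {X : ℕ → Ω → S} {k : ℕ} {y : Ω → α}
    (h : HistConst X k y) (hX : ∀ l ≤ k, Measurable (X l)) : Measurable y := by
  rcases isEmpty_or_nonempty Ω with hΩ | ⟨⟨ω⟩⟩
  · exact measurable_of_empty y
  · haveI : Nonempty α := ⟨y ω⟩
    obtain ⟨Y, hY⟩ := h.factor
    have : y = Y ∘ histOf X k := funext hY
    rw [this]
    exact (measurable_of_finite Y).comp (histOf_measurable hX)

lemma HistConst.of_measurable {Ω S α : Type} [mS : MeasurableSpace S] [MeasurableSpace α]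
    [MeasurableSingletonClass α] {X : ℕ → Ω → S} {k : ℕ} {y : Ω → α}
    (h : Measurable[⨆ j ∈ Finset.range (k + 1), MeasurableSpace.comap (X j) mS] y) :
    HistConst X k y := by
  have hle : (⨆ j ∈ Finset.range (k + 1), MeasurableSpace.comap (X j) mS)
      ≤ MeasurableSpace.comap (histOf X k) ⊤ := by
    refine iSup₂_le fun j hj => ?_
    rintro _ ⟨t, _, rfl⟩
    refine ⟨{a | a ⟨j, by simpa using hj⟩ ∈ t}, trivial, rfl⟩
  intro ω ω' H
  obtain ⟨t, _, ht⟩ := hle _ (h (measurableSet_singleton (y ω')))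
  have h2 : ω' ∈ y ⁻¹' {y ω'} := rfl
  rw [← ht] at h2
  have h3 : ω ∈ y ⁻¹' {y ω'} := by
    rw [← ht]
    show histOf X k ω ∈ t
    rw [(histOf_eq_iff X k ω ω').2 H]
    exact h2
  exact h3

lemma lintegral_fiber {Ω β : Type} [Fintype β] [MeasurableSpace β] [MeasurableSingletonClass β]
    {mm : MeasurableSpace Ω} (μ : Measure Ω) {h : Ω → β} (hh : Measurable h) (F : Ω → ENNReal) :
    ∫⁻ ω, F ω ∂μ = ∑ b, ∫⁻ ω in h ⁻¹' {b}, F ω ∂μ := by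
  have hu : (⋃ b, h ⁻¹' {b}) = Set.univ := by
    ext ω; simp
  rw [← setLIntegral_univ, ← hu, lintegral_iUnion (fun b => hh (measurableSet_singleton b)),
    tsum_fintype]
  intro a b hab
  rw [Function.onFun, Set.disjoint_left]
  rintro ω rfl h2
  exact hab h2

lemma markov_step {Ω S α : Type} [Fintype S] [MeasurableSpace S] [MeasurableSingletonClass S]
    {mm : MeasurableSpace Ω} {μ : Measure Ω} [IsProbabilityMeasure μ] {X : ℕ → Ω → S}
    {P : S → S → ℝ} (hX : ∀ k, Measurable (X k)) (hM : IsMarkovChain μ X P)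
    (hP : ∀ i j, 0 ≤ P i j) (k : ℕ) {y : Ω → α} (hy : HistConst X k y) (g : S → α → ENNReal) :
    ∫⁻ ω, g (X (k + 1) ω) (y ω) ∂μ
      = ∫⁻ ω, ∑ j, ENNReal.ofReal (P (X k ω) j) * g j (y ω) ∂μ := by
  have hh : Measurable (histOf X k) := histOf_measurable fun l _ => hX l
  rw [lintegral_fiber μ hh, lintegral_fiber μ hh (fun ω => ∑ j, _)]
  refine Finset.sum_congr rfl fun a _ => ?_
  have hA := hh (measurableSet_singleton a)
  rcases Set.eq_empty_or_nonempty (histOf X k ⁻¹' {a}) with h0 | ⟨ω0, hω0⟩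
  · rw [h0]; simp
  have hmem : ∀ ω ∈ histOf X k ⁻¹' {a}, ∀ l ≤ k, X l ω = X l ω0 := by
    intro ω hω
    have h1 : histOf X k ω = a := hω
    have h2 : histOf X k ω0 = a := hω0
    exact (histOf_eq_iff X k ω ω0).1 (h1.trans h2.symm)
  have hset : histOf X k ⁻¹' {a} = {ω | ∀ l ≤ k, X l ω = X l ω0} := by
    ext ω
    constructor
    · exact hmem ω
    · intro h
      have h2 : histOf X k ω0 = a := hω0
      show histOf X k ω = a
      rw [← h2]
      exact (histOf_eq_iff X k ω ω0).2 h
  have e1 : ∫⁻ ω in histOf X k ⁻¹' {a}, g (X (k + 1) ω) (y ω) ∂μ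
      = ∫⁻ ω in histOf X k ⁻¹' {a}, g (X (k + 1) ω) (y ω0) ∂μ :=
    setLIntegral_congr_fun hA fun ω hω => by
      show g (X (k + 1) ω) (y ω) = _
      rw [hy ω ω0 (hmem ω hω)]
  have e2 : ∫⁻ ω in histOf X k ⁻¹' {a}, ∑ j, ENNReal.ofReal (P (X k ω) j) * g j (y ω) ∂μ
      = ∫⁻ ω in histOf X k ⁻¹' {a}, ∑ j, ENNReal.ofReal (P (X k ω0) j) * g j (y ω0) ∂μ :=
    setLIntegral_congr_fun hA fun ω hω => by
      show ∑ j, ENNReal.ofReal (P (X k ω) j) * g j (y ω) = _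
      rw [hy ω ω0 (hmem ω hω), hmem ω hω k le_rfl]
  rw [e1, e2, setLIntegral_const, lintegral_fiber _ (hX (k + 1)), Finset.sum_mul]
  refine Finset.sum_congr rfl fun j _ => ?_
  have hj := hX (k + 1) (measurableSet_singleton j)
  rw [Measure.restrict_restrict hj]
  have e3 : ∫⁻ ω in X (k + 1) ⁻¹' {j} ∩ histOf X k ⁻¹' {a}, g (X (k + 1) ω) (y ω0) ∂μ
      = ∫⁻ ω in X (k + 1) ⁻¹' {j} ∩ histOf X k ⁻¹' {a}, g j (y ω0) ∂μ :=
    setLIntegral_congr_fun (hj.inter hA) fun ω hω => by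
      have : X (k + 1) ω = j := hω.1
      show g (X (k + 1) ω) (y ω0) = _
      rw [this]
  rw [e3, setLIntegral_const]
  have hm := hM k j (fun l => X l ω0)
  have e4 : X (k + 1) ⁻¹' {j} ∩ histOf X k ⁻¹' {a}
      = {ω | X (k + 1) ω = j ∧ ∀ l ≤ k, X l ω = X l ω0} := by
    rw [hset]; rfl
  rw [e4, hset]
  have e5 : μ {ω | X (k + 1) ω = j ∧ ∀ l ≤ k, X l ω = X l ω0}
      = ENNReal.ofReal (P (X k ω0) j) * μ {ω | ∀ l ≤ k, X l ω = X l ω0} := by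
    rw [← ENNReal.ofReal_toReal (measure_ne_top μ {ω | X (k + 1) ω = j ∧ _}), hm,
      ENNReal.ofReal_mul (hP _ _), ENNReal.ofReal_toReal (measure_ne_top μ _)]
  rw [e5]
  ring

lemma indep_of_hist {Ω S S' : Type} [Fintype S] [MeasurableSpace S] [MeasurableSingletonClass S]
    [Fintype S'] [MeasurableSpace S'] [MeasurableSingletonClass S']
    {mm : MeasurableSpace Ω} {μ : Measure Ω} [IsProbabilityMeasure μ]
    {X : ℕ → Ω → S} {Y : ℕ → Ω → S'} (hX : ∀ k, Measurable (X k)) (hY : ∀ k, Measurable (Y k))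
    (h : ∀ k ω0 ω1, μ {ω | (∀ l ≤ k, X l ω = X l ω0) ∧ ∀ l ≤ k, Y l ω = Y l ω1}
      = μ {ω | ∀ l ≤ k, X l ω = X l ω0} * μ {ω | ∀ l ≤ k, Y l ω = Y l ω1}) :
    IndepFun (fun ω l => X l ω) (fun ω l => Y l ω) μ := by
  have hk : ∀ k, IndepFun (histOf X k) (histOf Y k) μ := by
    intro k
    have mX : Measurable (histOf X k) := histOf_measurable fun l _ => hX l
    have mY : Measurable (histOf Y k) := histOf_measurable fun l _ => hY l
    rw [indepFun_iff_map_prod_eq_prod_map_map mX.aemeasurable mY.aemeasurable]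
    refine Measure.ext_of_singleton ?_
    rintro ⟨a, b⟩
    rw [← Set.singleton_prod_singleton, Measure.prod_prod,
      Measure.map_apply (mX.prodMk mY) (by measurability),
      Measure.map_apply mX (by measurability), Measure.map_apply mY (by measurability)]
    have e : (fun ω => (histOf X k ω, histOf Y k ω)) ⁻¹' ({a} ×ˢ {b})
      = histOf X k ⁻¹' {a} ∩ histOf Y k ⁻¹' {b} := rfl
    rw [e]
    rcases Set.eq_empty_or_nonempty (histOf X k ⁻¹' {a}) with h0 | ⟨ω0, hω0⟩
    · rw [h0]; simp
    rcases Set.eq_empty_or_nonempty (histOf Y k ⁻¹' {b}) with h0 | ⟨ω1, hω1⟩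
    · rw [h0]; simp
    have ha : a = histOf X k ω0 := hω0.symm
    have hb : b = histOf Y k ω1 := hω1.symm
    have s1 : histOf X k ⁻¹' {a} = {ω | ∀ l ≤ k, X l ω = X l ω0} := by
      ext ω
      rw [ha]
      exact histOf_eq_iff X k ω ω0
    have s2 : histOf Y k ⁻¹' {b} = {ω | ∀ l ≤ k, Y l ω = Y l ω1} := by
      ext ω
      rw [hb]
      exact histOf_eq_iff Y k ω ω1
    rw [s1, s2]
    exact h k ω0 ω1
  refine IndepFun.process_indepFun_process hX hY fun I J => ?_
  have hb : ∀ l ∈ I ∪ J, l ≤ (I ∪ J).sup id := fun l hl => Finset.le_sup (f := id) hl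
  exact (hk ((I ∪ J).sup id)).comp
    (φ := fun a (i : I) => a ⟨i, Nat.lt_succ_of_le (hb i (Finset.mem_union_left _ i.2))⟩)
    (ψ := fun a (i : J) => a ⟨i, Nat.lt_succ_of_le (hb i (Finset.mem_union_right _ i.2))⟩)
    (measurable_of_finite _) (measurable_of_finite _)

/-- Deterministic update map of the extended chain. -/
def stepX {NN MM T : ℕ} [NeZero T] (f : Fin MM → Bool) (χ : XT NN MM T) (a : Fin NN)
    (b : Fin MM) : XT NN MM T :=
  if f b = true then (a, b, a, 0) else (a, b, χ.2.2.1, χ.2.2.2 + 1)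

lemma pbar_eq {NN MM T : ℕ} [NeZero T] (P : Matrix (Fin NN) (Fin NN) ℝ)
    (Q : Matrix (Fin MM) (Fin MM) ℝ) (f : Fin MM → Bool) (χ χ' : XT NN MM T) :
    pbar P Q f χ χ' = if χ' = stepX f χ χ'.1 χ'.2.1 then P χ.1 χ'.1 * Q χ.2.1 χ'.2.1 else 0 := by
  obtain ⟨a, b, c, d⟩ := χ
  obtain ⟨a', b', c', d'⟩ := χ'
  unfold pbar stepX
  by_cases hf : f b' = true
  · simp only [hf, if_true]
    by_cases h : a' = c' ∧ d' = 0
    · obtain ⟨rfl, rfl⟩ := h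
      simp
    · rw [if_neg h, if_neg]
      · simp
      · intro H
        simp only [Prod.mk.injEq, true_and] at H
        exact h ⟨H.1.symm, H.2⟩
  · simp only [hf]
    by_cases h : c' = c ∧ d' = d + 1
    · obtain ⟨rfl, rfl⟩ := h
      simp
    · rw [if_neg (by simp), if_neg h, if_neg]
      · simp
      · intro H
        simp only [Bool.false_eq_true, if_false, Prod.mk.injEq, true_and] at H
        exact h H

lemma stepX_fst {NN MM T : ℕ} [NeZero T] (f : Fin MM → Bool) (χ : XT NN MM T) (a : Fin NN)
    (b : Fin MM) : (stepX f χ a b).1 = a := by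
  unfold stepX; split_ifs <;> rfl

lemma stepX_snd {NN MM T : ℕ} [NeZero T] (f : Fin MM → Bool) (χ : XT NN MM T) (a : Fin NN)
    (b : Fin MM) : (stepX f χ a b).2.1 = b := by
  unfold stepX; split_ifs <;> rfl

lemma stepX_inX {NN MM T : ℕ} [NeZero T] (f : Fin MM → Bool) (χ : XT NN MM T) (a : Fin NN)
    (b : Fin MM) : inX f (stepX f χ a b) := by
  intro h
  rw [stepX_snd] at h
  simp [stepX, h]

lemma pbar_nonneg {NN MM T : ℕ} [NeZero T] {P : Matrix (Fin NN) (Fin NN) ℝ}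
    {Q : Matrix (Fin MM) (Fin MM) ℝ} (hP0 : ∀ i j, 0 ≤ P i j) (hQ0 : ∀ i j, 0 ≤ Q i j)
    (f : Fin MM → Bool) (χ χ' : XT NN MM T) : 0 ≤ pbar P Q f χ χ' := by
  rw [pbar_eq]
  split_ifs
  · exact mul_nonneg (hP0 _ _) (hQ0 _ _)
  · exact le_rfl

lemma pbar_sum {R : Type} [CommSemiring R] {NN MM T : ℕ} [NeZero T]
    (P : Matrix (Fin NN) (Fin NN) ℝ) (Q : Matrix (Fin MM) (Fin MM) ℝ) (f : Fin MM → Bool)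
    (φ : ℝ → R) (hφ : φ 0 = 0) (χ : XT NN MM T) (g : XT NN MM T → R) :
    ∑ χ', φ (pbar P Q f χ χ') * g χ'
      = ∑ a, ∑ b, φ (P χ.1 a * Q χ.2.1 b) * g (stepX f χ a b) := by
  rw [Fintype.sum_prod_type]
  refine Finset.sum_congr rfl fun a _ => ?_
  rw [Fintype.sum_prod_type]
  refine Finset.sum_congr rfl fun b _ => ?_
  have hs : (a, b, (stepX f χ a b).2.2) = stepX f χ a b := by
    unfold stepX; split_ifs <;> rfl
  rw [Finset.sum_eq_single (stepX f χ a b).2.2]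
  · rw [pbar_eq, if_pos (by exact hs), hs, stepX_fst, stepX_snd]
  · intro cd _ hcd
    rw [pbar_eq, if_neg, hφ, zero_mul]
    intro H
    apply hcd
    have := congrArg (fun z => z.2.2) H
    exact this
  · intro h; exact absurd (Finset.mem_univ _) h

lemma intToFin_succ (T : ℕ) [NeZero T] (a : ℤ) : intToFin T (a + 1) = intToFin T a + 1 := by
  have hT : 0 < (T : ℤ) := by exact_mod_cast Nat.pos_of_ne_zero (NeZero.ne T)
  apply Fin.ext
  rw [Fin.val_add, Fin.val_one']
  have h1 : 0 ≤ a % (T : ℤ) := Int.emod_nonneg a (by omega)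
  have h2 : 0 ≤ (a + 1) % (T : ℤ) := Int.emod_nonneg _ (by omega)
  have : ((intToFin T (a + 1)).val : ℤ)
      = ((((intToFin T a).val + 1 % T) % T : ℕ) : ℤ) := by
    simp only [intToFin, Int.natCast_emod, Nat.cast_add, Int.toNat_of_nonneg h1,
      Int.toNat_of_nonneg h2, Nat.cast_one]
    rw [← Int.add_emod]
  exact_mod_cast this

lemma intToFin_zero (T : ℕ) [NeZero T] : intToFin T 0 = 0 := by
  apply Fin.ext
  simp [intToFin]

lemma intToFin_val (T : ℕ) [NeZero T] (d : Fin T) : intToFin T (d.val : ℤ) = d := by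
  apply Fin.ext
  have : ((d.val : ℤ) % (T : ℤ)) = d.val := by
    have := d.2
    exact Int.emod_eq_of_lt (by omega) (by omega)
  simp only [intToFin, this, Int.toNat_natCast]

lemma rbar_zero {Ω : Type} {NN MM T : ℕ} [NeZero T] (r : ℕ → Ω → Fin NN)
    (s : ℕ → Ω → Fin MM) (f : Fin MM → Bool) (τ₀ : ℤ) (σ₀ : Fin NN) (ω : Ω) :
    rbarProc (T := T) r s f τ₀ σ₀ 0 ω
      = if f (s 0 ω) = true then (r 0 ω, s 0 ω, r 0 ω, 0)
        else (r 0 ω, s 0 ω, σ₀, intToFin T (-τ₀)) := by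
  have hiff : (∃ j ≤ 0, f (s j ω) = true) ↔ f (s 0 ω) = true := by
    constructor
    · rintro ⟨j, hj, h⟩
      obtain rfl : j = 0 := by omega
      exact h
    · exact fun h => ⟨0, le_rfl, h⟩
  unfold rbarProc sigmaProc rhoProc tauZ
  simp only [hiff]
  split_ifs with h
  · simp [intToFin_zero]
  · simp

lemma rbar_succ {Ω : Type} {NN MM T : ℕ} [NeZero T] (r : ℕ → Ω → Fin NN)
    (s : ℕ → Ω → Fin MM) (f : Fin MM → Bool) (τ₀ : ℤ) (σ₀ : Fin NN) (k : ℕ) (ω : Ω) :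
    rbarProc (T := T) r s f τ₀ σ₀ (k + 1) ω
      = stepX f (rbarProc r s f τ₀ σ₀ k ω) (r (k + 1) ω) (s (k + 1) ω) := by
  unfold stepX
  split_ifs with h
  · have hex : ∃ j ≤ k + 1, f (s j ω) = true := ⟨k + 1, le_rfl, h⟩
    unfold rbarProc sigmaProc rhoProc tauZ
    rw [if_pos hex, if_pos hex, Nat.findGreatest_eq h]
    simp [intToFin_zero]
  · have hiff : (∃ j ≤ k + 1, f (s j ω) = true) ↔ (∃ j ≤ k, f (s j ω) = true) := by
      constructor
      · rintro ⟨j, hj, h'⟩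
        rcases Nat.lt_or_ge k j with h1 | h1
        · obtain rfl : j = k + 1 := by omega
          exact absurd h' h
        · exact ⟨j, h1, h'⟩
      · rintro ⟨j, hj, h'⟩
        exact ⟨j, by omega, h'⟩
    unfold rbarProc sigmaProc rhoProc tauZ
    simp only [hiff, Nat.findGreatest_of_not (P := fun j => f (s j ω) = true) h]
    rw [← intToFin_succ]
    congr 4
    push_cast
    ring

lemma rbar_inX {Ω : Type} {NN MM T : ℕ} [NeZero T] (r : ℕ → Ω → Fin NN)
    (s : ℕ → Ω → Fin MM) (f : Fin MM → Bool) (τ₀ : ℤ) (σ₀ : Fin NN) (k : ℕ) (ω : Ω) :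
    inX f (rbarProc (T := T) r s f τ₀ σ₀ k ω) := by
  cases k with
  | zero =>
    rw [rbar_zero]
    split_ifs with h
    · intro _
      exact ⟨rfl, rfl⟩
    · intro h'
      exact absurd h' h
  | succ k =>
    rw [rbar_succ]
    exact stepX_inX _ _ _ _

lemma rbar_hist {Ω : Type} {NN MM T : ℕ} [NeZero T] (r : ℕ → Ω → Fin NN)
    (s : ℕ → Ω → Fin MM) (f : Fin MM → Bool) (τ₀ : ℤ) (σ₀ : Fin NN) (k : ℕ) :
    HistConst (fun l ω => (r l ω, s l ω)) k (rbarProc (T := T) r s f τ₀ σ₀ k) := by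
  induction k with
  | zero =>
    intro ω ω' h
    have := h 0 le_rfl
    simp only [Prod.mk.injEq] at this
    rw [rbar_zero, rbar_zero, this.1, this.2]
  | succ k ih =>
    intro ω ω' h
    have h1 := h (k + 1) le_rfl
    simp only [Prod.mk.injEq] at h1
    rw [rbar_succ, rbar_succ, h1.1, h1.2, ih ω ω' fun l hl => h l (by omega)]

/-- The pair `(r, s)` is Markov with product kernel. -/
lemma pair_markov {NN MM : ℕ} {P : Matrix (Fin NN) (Fin NN) ℝ}
    {Q : Matrix (Fin MM) (Fin MM) ℝ} (S : MJLSReal NN MM P Q) (k : ℕ) (a : Fin NN) (b : Fin MM)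
    (i : ℕ → Fin NN) (j : ℕ → Fin MM) :
    letI := S.inst
    (S.μ {ω | (S.r (k + 1) ω = a ∧ S.s (k + 1) ω = b) ∧
        ∀ l ≤ k, S.r l ω = i l ∧ S.s l ω = j l}).toReal
      = P (i k) a * Q (j k) b * (S.μ {ω | ∀ l ≤ k, S.r l ω = i l ∧ S.s l ω = j l}).toReal := by
  letI := S.inst
  have key : ∀ (U : Set (ℕ → Fin NN)) (V : Set (ℕ → Fin MM)), MeasurableSet U → MeasurableSet V →
      S.μ ({ω | (fun l => S.r l ω) ∈ U} ∩ {ω | (fun l => S.s l ω) ∈ V})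
        = S.μ {ω | (fun l => S.r l ω) ∈ U} * S.μ {ω | (fun l => S.s l ω) ∈ V} := by
    intro U V hU hV
    exact (indepFun_iff_measure_inter_preimage_eq_mul.1 S.indep) U V hU hV
  have mU : ∀ (i : ℕ → Fin NN) k, MeasurableSet {x : ℕ → Fin NN | ∀ l ≤ k, x l = i l} := by
    intro i k
    have : {x : ℕ → Fin NN | ∀ l ≤ k, x l = i l}
        = ⋂ l, ⋂ (_ : l ≤ k), (fun x : ℕ → Fin NN => x l) ⁻¹' {i l} := by ext; simp
    rw [this]
    exact MeasurableSet.iInter fun l => MeasurableSet.iInter fun _ =>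
      (measurable_pi_apply l) (measurableSet_singleton _)
  have mV : ∀ (i : ℕ → Fin MM) k, MeasurableSet {x : ℕ → Fin MM | ∀ l ≤ k, x l = i l} := by
    intro i k
    have : {x : ℕ → Fin MM | ∀ l ≤ k, x l = i l}
        = ⋂ l, ⋂ (_ : l ≤ k), (fun x : ℕ → Fin MM => x l) ⁻¹' {i l} := by ext; simp
    rw [this]
    exact MeasurableSet.iInter fun l => MeasurableSet.iInter fun _ =>
      (measurable_pi_apply l) (measurableSet_singleton _)
  have mU' : MeasurableSet {x : ℕ → Fin NN | x (k + 1) = a ∧ ∀ l ≤ k, x l = i l} :=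
    by
    have h1 : MeasurableSet ((fun x : ℕ → Fin NN => x (k + 1)) ⁻¹' {a}) :=
      (measurable_pi_apply (k + 1)) (measurableSet_singleton a)
    exact h1.inter (mU i k)
  have mV' : MeasurableSet {x : ℕ → Fin MM | x (k + 1) = b ∧ ∀ l ≤ k, x l = j l} :=
    by
    have h1 : MeasurableSet ((fun x : ℕ → Fin MM => x (k + 1)) ⁻¹' {b}) :=
      (measurable_pi_apply (k + 1)) (measurableSet_singleton b)
    exact h1.inter (mV j k)
  have e1 : {ω | (S.r (k + 1) ω = a ∧ S.s (k + 1) ω = b) ∧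
        ∀ l ≤ k, S.r l ω = i l ∧ S.s l ω = j l}
      = {ω | S.r (k + 1) ω = a ∧ ∀ l ≤ k, S.r l ω = i l}
        ∩ {ω | S.s (k + 1) ω = b ∧ ∀ l ≤ k, S.s l ω = j l} := by
    ext ω
    simp only [Set.mem_ofPred_eq, Set.mem_inter_iff]
    constructor
    · rintro ⟨⟨h1, h2⟩, h3⟩
      exact ⟨⟨h1, fun l hl => (h3 l hl).1⟩, h2, fun l hl => (h3 l hl).2⟩
    · rintro ⟨⟨h1, h2⟩, h3, h4⟩
      exact ⟨⟨h1, h3⟩, fun l hl => ⟨h2 l hl, h4 l hl⟩⟩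
  have e2 : {ω | ∀ l ≤ k, S.r l ω = i l ∧ S.s l ω = j l}
      = {ω | ∀ l ≤ k, S.r l ω = i l} ∩ {ω | ∀ l ≤ k, S.s l ω = j l} := by
    ext ω
    simp only [Set.mem_ofPred_eq, Set.mem_inter_iff]
    constructor
    · intro h3
      exact ⟨fun l hl => (h3 l hl).1, fun l hl => (h3 l hl).2⟩
    · rintro ⟨h2, h4⟩
      exact fun l hl => ⟨h2 l hl, h4 l hl⟩
  have k1 := key _ _ mU' mV'
  have k2 := key _ _ (mU i k) (mV j k)
  simp only [Set.mem_ofPred_eq] at k1 k2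
  rw [e1, e2, k1, k2, ENNReal.toReal_mul, ENNReal.toReal_mul, S.markov_r k a i, S.markov_s k b j]
  ring

/-- `r̄` is a realization of the extended chain. -/
def thetaOf {NN MM T : ℕ} [NeZero T] {P : Matrix (Fin NN) (Fin NN) ℝ}
    {Q : Matrix (Fin MM) (Fin MM) ℝ} (S : MJLSReal NN MM P Q) (f : Fin MM → Bool) (τ₀ : ℤ)
    (σ₀ : Fin NN) : ThetaReal NN MM T P Q f where
  Ω := S.Ω
  inst := S.inst
  μ := S.μ
  prob := S.prob
  θ := rbarProc S.r S.s f τ₀ σ₀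
  meas := by
    intro k
    letI := S.inst
    exact (rbar_hist S.r S.s f τ₀ σ₀ k).measurable
      fun l _ => (S.meas_r l).prodMk (S.meas_s l)
  mem := fun k ω => rbar_inX _ _ _ _ _ _ _
  markov := by
    letI := S.inst
    haveI := S.prob
    intro k χ' i
    rcases Set.eq_empty_or_nonempty
      {ω | ∀ l ≤ k, rbarProc (T := T) S.r S.s f τ₀ σ₀ l ω = i l} with h0 | ⟨ω0, hω0⟩
    · have h1 : {ω | rbarProc (T := T) S.r S.s f τ₀ σ₀ (k + 1) ω = χ' ∧
          ∀ l ≤ k, rbarProc (T := T) S.r S.s f τ₀ σ₀ l ω = i l} = ∅ := by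
        rw [Set.eq_empty_iff_forall_notMem] at h0 ⊢
        exact fun ω h => h0 ω h.2
      rw [h0, h1]; simp
    have hω0' : ∀ l ≤ k, rbarProc (T := T) S.r S.s f τ₀ σ₀ l ω0 = i l := hω0
    have hset : ∀ ω, (∀ l ≤ k, rbarProc (T := T) S.r S.s f τ₀ σ₀ l ω = i l) ↔
        (∀ l ≤ k, S.r l ω = S.r l ω0 ∧ S.s l ω = S.s l ω0) := by
      intro ω
      constructor
      · intro h l hl
        have h1 := (h l hl).trans (hω0' l hl).symm
        exact ⟨congrArg (fun z => z.1) h1, congrArg (fun z => z.2.1) h1⟩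
      · intro h l hl
        rw [← hω0' l hl]
        refine rbar_hist S.r S.s f τ₀ σ₀ l ω ω0 fun l' hl' => ?_
        have := h l' (hl'.trans hl)
        simp only [this.1, this.2]
    have hk1 : (i k).1 = S.r k ω0 := by rw [← hω0' k le_rfl]; rfl
    have hk2 : (i k).2.1 = S.s k ω0 := by rw [← hω0' k le_rfl]; rfl
    rw [pbar_eq]
    split_ifs with hχ
    · have e1 : {ω | rbarProc (T := T) S.r S.s f τ₀ σ₀ (k + 1) ω = χ' ∧
          ∀ l ≤ k, rbarProc (T := T) S.r S.s f τ₀ σ₀ l ω = i l}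
          = {ω | (S.r (k + 1) ω = χ'.1 ∧ S.s (k + 1) ω = χ'.2.1) ∧
            ∀ l ≤ k, S.r l ω = S.r l ω0 ∧ S.s l ω = S.s l ω0} := by
        ext ω
        simp only [Set.mem_ofPred_eq, ← hset ω]
        refine and_congr_left fun h => ?_
        rw [rbar_succ, h k le_rfl]
        constructor
        · rintro rfl
          rw [stepX_fst, stepX_snd]
          exact ⟨rfl, rfl⟩
        · rintro ⟨h1, h2⟩
          rw [h1, h2, ← hχ]
      have e2 : {ω | ∀ l ≤ k, rbarProc (T := T) S.r S.s f τ₀ σ₀ l ω = i l}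
          = {ω | ∀ l ≤ k, S.r l ω = S.r l ω0 ∧ S.s l ω = S.s l ω0} := by
        ext ω
        exact hset ω
      rw [e1, e2, hk1, hk2]
      exact pair_markov S k χ'.1 χ'.2.1 (fun l => S.r l ω0) (fun l => S.s l ω0)
    · have e1 : {ω | rbarProc (T := T) S.r S.s f τ₀ σ₀ (k + 1) ω = χ' ∧
          ∀ l ≤ k, rbarProc (T := T) S.r S.s f τ₀ σ₀ l ω = i l} = ∅ := by
        rw [Set.eq_empty_iff_forall_notMem]
        rintro ω ⟨h1, h2⟩
        apply hχ
        rw [rbar_succ, h2 k le_rfl] at h1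
        rw [← h1, stepX_fst, stepX_snd]
      rw [e1]; simp

open Classical in
lemma theta_step {NN MM T : ℕ} [NeZero T] {P : Matrix (Fin NN) (Fin NN) ℝ}
    {Q : Matrix (Fin MM) (Fin MM) ℝ} {f : Fin MM → Bool}
    (hP0 : ∀ i j, 0 ≤ P i j) (hQ0 : ∀ i j, 0 ≤ Q i j)
    (S : ThetaReal NN MM T P Q f) (k : ℕ) (U : Fin NN → Fin MM → Prop) {y : S.Ω → Prop}
    (hy : HistConst S.θ k y) (c : ENNReal)
    (hc : ∀ ω, y ω → ∑ a, ∑ b, (if U a b then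
      ENNReal.ofReal (P (S.θ k ω).1 a * Q (S.θ k ω).2.1 b) else 0) = c) :
    letI := S.inst
    S.μ {ω | U (S.θ (k + 1) ω).1 (S.θ (k + 1) ω).2.1 ∧ y ω} = c * S.μ {ω | y ω} := by
  letI := S.inst
  haveI := S.prob
  have hst := markov_step S.meas S.markov (pbar_nonneg hP0 hQ0 f) k hy
    (fun χ' p => if U χ'.1 χ'.2.1 ∧ p then 1 else 0)
  have my : MeasurableSet {ω | y ω} := by
    have : Measurable y := hy.measurable fun l _ => S.meas l
    exact measurableSet_setOf.2 this
  have mU : MeasurableSet {ω | U (S.θ (k + 1) ω).1 (S.θ (k + 1) ω).2.1 ∧ y ω} := by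
    have h1 : MeasurableSet (S.θ (k + 1) ⁻¹' {χ | U χ.1 χ.2.1}) :=
      S.meas (k + 1) (Set.toFinite _).measurableSet
    exact h1.inter my
  have e1 : S.μ {ω | U (S.θ (k + 1) ω).1 (S.θ (k + 1) ω).2.1 ∧ y ω}
      = ∫⁻ ω, (if U (S.θ (k + 1) ω).1 (S.θ (k + 1) ω).2.1 ∧ y ω then 1 else 0) ∂S.μ := by
    rw [← lintegral_indicator_one mU]
    refine lintegral_congr fun ω => ?_
    rw [Set.indicator_apply]
    rfl
  have e2 : c * S.μ {ω | y ω} = ∫⁻ ω, (if y ω then c else 0) ∂S.μ := by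
    rw [← lintegral_indicator_const my]
    refine lintegral_congr fun ω => ?_
    rw [Set.indicator_apply]
    rfl
  rw [e1, e2, hst]
  refine lintegral_congr fun ω => ?_
  rw [pbar_sum P Q f ENNReal.ofReal ENNReal.ofReal_zero]
  by_cases hyω : y ω
  · rw [if_pos hyω, ← hc ω hyω]
    refine Finset.sum_congr rfl fun a _ => Finset.sum_congr rfl fun b _ => ?_
    rw [stepX_fst, stepX_snd]
    by_cases hU : U a b
    · rw [if_pos ⟨hU, hyω⟩, if_pos hU, mul_one]
    · rw [if_neg (fun h => hU h.1), if_neg hU, mul_zero]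
  · rw [if_neg hyω]
    refine Finset.sum_eq_zero fun a _ => Finset.sum_eq_zero fun b _ => ?_
    rw [if_neg (fun h => hyω h.2), mul_zero]

lemma theta_r {NN MM T : ℕ} [NeZero T] {P : Matrix (Fin NN) (Fin NN) ℝ}
    {Q : Matrix (Fin MM) (Fin MM) ℝ} {f : Fin MM → Bool}
    (hP0 : ∀ i j, 0 ≤ P i j) (hQ0 : ∀ i j, 0 ≤ Q i j) (hQ1 : ∀ i, ∑ j, Q i j = 1)
    (S : ThetaReal NN MM T P Q f) (k : ℕ) (a : Fin NN) (i : ℕ → Fin NN) :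
    letI := S.inst
    S.μ {ω | (S.θ (k + 1) ω).1 = a ∧ ∀ l ≤ k, (S.θ l ω).1 = i l}
      = ENNReal.ofReal (P (i k) a) * S.μ {ω | ∀ l ≤ k, (S.θ l ω).1 = i l} := by
  refine theta_step hP0 hQ0 S k (fun a' _ => a' = a) (y := fun ω => ∀ l ≤ k, (S.θ l ω).1 = i l)
    ?_ _ ?_
  · intro ω ω' h
    simp only [eq_iff_iff]
    exact forall₂_congr fun l hl => by rw [h l hl]
  · intro ω hω
    rw [hω k le_rfl, Finset.sum_eq_single a]
    · simp only [if_true]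
      rw [← ENNReal.ofReal_sum_of_nonneg (fun b _ => mul_nonneg (hP0 _ _) (hQ0 _ _)),
        ← Finset.mul_sum, hQ1, mul_one]
    · intro b _ hb
      simp [hb]
    · simp

lemma theta_s {NN MM T : ℕ} [NeZero T] {P : Matrix (Fin NN) (Fin NN) ℝ}
    {Q : Matrix (Fin MM) (Fin MM) ℝ} {f : Fin MM → Bool}
    (hP0 : ∀ i j, 0 ≤ P i j) (hQ0 : ∀ i j, 0 ≤ Q i j) (hP1 : ∀ i, ∑ j, P i j = 1)
    (S : ThetaReal NN MM T P Q f) (k : ℕ) (b : Fin MM) (j : ℕ → Fin MM) :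
    letI := S.inst
    S.μ {ω | (S.θ (k + 1) ω).2.1 = b ∧ ∀ l ≤ k, (S.θ l ω).2.1 = j l}
      = ENNReal.ofReal (Q (j k) b) * S.μ {ω | ∀ l ≤ k, (S.θ l ω).2.1 = j l} := by
  refine theta_step hP0 hQ0 S k (fun _ b' => b' = b)
    (y := fun ω => ∀ l ≤ k, (S.θ l ω).2.1 = j l) ?_ _ ?_
  · intro ω ω' h
    simp only [eq_iff_iff]
    exact forall₂_congr fun l hl => by rw [h l hl]
  · intro ω hω
    rw [hω k le_rfl]
    have e : ∀ a, (∑ b', if b' = b then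
        ENNReal.ofReal (P (S.θ k ω).1 a * Q (j k) b') else 0)
        = ENNReal.ofReal (P (S.θ k ω).1 a * Q (j k) b) := by
      intro a
      rw [Finset.sum_eq_single b]
      · rw [if_pos rfl]
      · intro b' _ hb
        rw [if_neg hb]
      · intro h; exact absurd (Finset.mem_univ _) h
    refine (Finset.sum_congr (g := fun a => ENNReal.ofReal (P (S.θ k ω).1 a * Q (j k) b)) rfl
      fun a _ => ?_).trans ?_
    · rw [← e a]
      refine Finset.sum_congr rfl fun b' _ => ?_
      by_cases hb : b' = b <;> simp [hb]
    rw [← ENNReal.ofReal_sum_of_nonneg (fun b _ => mul_nonneg (hP0 _ _) (hQ0 _ _)),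
        ← Finset.sum_mul, hP1, one_mul]

lemma theta_rs {NN MM T : ℕ} [NeZero T] {P : Matrix (Fin NN) (Fin NN) ℝ}
    {Q : Matrix (Fin MM) (Fin MM) ℝ} {f : Fin MM → Bool}
    (hP0 : ∀ i j, 0 ≤ P i j) (hQ0 : ∀ i j, 0 ≤ Q i j)
    (S : ThetaReal NN MM T P Q f) (k : ℕ) (a : Fin NN) (b : Fin MM) (i : ℕ → Fin NN)
    (j : ℕ → Fin MM) :
    letI := S.inst
    S.μ {ω | ((S.θ (k + 1) ω).1 = a ∧ (S.θ (k + 1) ω).2.1 = b) ∧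
        ((∀ l ≤ k, (S.θ l ω).1 = i l) ∧ ∀ l ≤ k, (S.θ l ω).2.1 = j l)}
      = ENNReal.ofReal (P (i k) a) * ENNReal.ofReal (Q (j k) b)
        * S.μ {ω | (∀ l ≤ k, (S.θ l ω).1 = i l) ∧ ∀ l ≤ k, (S.θ l ω).2.1 = j l} := by
  refine theta_step hP0 hQ0 S k (fun a' b' => a' = a ∧ b' = b)
    (y := fun ω => (∀ l ≤ k, (S.θ l ω).1 = i l) ∧ ∀ l ≤ k, (S.θ l ω).2.1 = j l) ?_ _ ?_
  · intro ω ω' h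
    simp only [eq_iff_iff]
    exact and_congr (forall₂_congr fun l hl => by rw [h l hl])
      (forall₂_congr fun l hl => by rw [h l hl])
  · intro ω hω
    rw [hω.1 k le_rfl, hω.2 k le_rfl, Finset.sum_eq_single a, Finset.sum_eq_single b]
    · simp only [and_self, if_true]
      rw [ENNReal.ofReal_mul (hP0 _ _)]
    · intro b' _ hb
      simp [hb]
    · simp
    · intro b' _ hb
      simp [hb]
    · simp

lemma all_le_succ {k : ℕ} {p : ℕ → Prop} : (∀ l ≤ k + 1, p l) ↔ p (k + 1) ∧ ∀ l ≤ k, p l := by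
  constructor
  · exact fun h => ⟨h _ le_rfl, fun l hl => h l (by omega)⟩
  · rintro ⟨h1, h2⟩ l hl
    rcases Nat.lt_or_ge k l with h | h
    · obtain rfl : l = k + 1 := by omega
      exact h1
    · exact h2 l h

lemma theta_prod {NN MM T : ℕ} [NeZero T] {P : Matrix (Fin NN) (Fin NN) ℝ}
    {Q : Matrix (Fin MM) (Fin MM) ℝ} {f : Fin MM → Bool}
    (hP0 : ∀ i j, 0 ≤ P i j) (hQ0 : ∀ i j, 0 ≤ Q i j)
    (hP1 : ∀ i, ∑ j, P i j = 1) (hQ1 : ∀ i, ∑ j, Q i j = 1)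
    (S : ThetaReal NN MM T P Q f) (χ : XT NN MM T)
    (h0 : letI := S.inst; ∀ᵐ ω ∂S.μ, S.θ 0 ω = χ) (i : ℕ → Fin NN) (j : ℕ → Fin MM) (k : ℕ) :
    letI := S.inst
    S.μ {ω | (∀ l ≤ k, (S.θ l ω).1 = i l) ∧ ∀ l ≤ k, (S.θ l ω).2.1 = j l}
      = S.μ {ω | ∀ l ≤ k, (S.θ l ω).1 = i l} * S.μ {ω | ∀ l ≤ k, (S.θ l ω).2.1 = j l} := by
  letI := S.inst
  haveI := S.prob
  induction k with
  | zero =>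
    simp only [Nat.le_zero, forall_eq]
    by_cases hi : i 0 = χ.1
    · have e1 : S.μ {ω | (S.θ 0 ω).1 = i 0} = 1 := by
        rw [← measure_univ (μ := S.μ)]
        refine measure_congr ?_
        filter_upwards [h0] with ω hω
        exact eq_true (by show (S.θ 0 ω).1 = i 0; rw [hω, hi]) |>.trans (eq_true trivial).symm
      have e2 : S.μ {ω | (S.θ 0 ω).1 = i 0 ∧ (S.θ 0 ω).2.1 = j 0}
          = S.μ {ω | (S.θ 0 ω).2.1 = j 0} := by
        refine measure_congr ?_
        filter_upwards [h0] with ω hω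
        refine propext (Iff.intro (fun h => h.2) (fun h => ⟨?_, h⟩))
        show (S.θ 0 ω).1 = i 0
        rw [hω, hi]
      rw [e1, e2, one_mul]
    · have e1 : S.μ {ω | (S.θ 0 ω).1 = i 0} = 0 := by
        refine measure_mono_null (t := {ω | ¬ S.θ 0 ω = χ}) ?_ (ae_iff.1 h0)
        intro ω (hω : (S.θ 0 ω).1 = i 0) h
        exact hi (by rw [← hω, h])
      rw [e1, zero_mul]
      exact measure_mono_null (fun ω hω => hω.1) e1
  | succ k ih =>
    simp only [all_le_succ]
    have e : {ω | ((S.θ (k + 1) ω).1 = i (k + 1) ∧ ∀ l ≤ k, (S.θ l ω).1 = i l) ∧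
        (S.θ (k + 1) ω).2.1 = j (k + 1) ∧ ∀ l ≤ k, (S.θ l ω).2.1 = j l}
        = {ω | ((S.θ (k + 1) ω).1 = i (k + 1) ∧ (S.θ (k + 1) ω).2.1 = j (k + 1)) ∧
        ((∀ l ≤ k, (S.θ l ω).1 = i l) ∧ ∀ l ≤ k, (S.θ l ω).2.1 = j l)} := by
      ext ω
      exact and_and_and_comm
    rw [e, theta_rs hP0 hQ0, theta_r hP0 hQ0 hQ1, theta_s hP0 hQ0 hP1, ih]
    ring

/-- The pair of chains underlying a realization of `θ`. -/
def mjlsOf {NN MM T : ℕ} [NeZero T] {P : Matrix (Fin NN) (Fin NN) ℝ}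
    {Q : Matrix (Fin MM) (Fin MM) ℝ} {f : Fin MM → Bool}
    (hP0 : ∀ i j, 0 ≤ P i j) (hQ0 : ∀ i j, 0 ≤ Q i j)
    (hP1 : ∀ i, ∑ j, P i j = 1) (hQ1 : ∀ i, ∑ j, Q i j = 1)
    (S : ThetaReal NN MM T P Q f) (χ : XT NN MM T)
    (h0 : letI := S.inst; ∀ᵐ ω ∂S.μ, S.θ 0 ω = χ) : MJLSReal NN MM P Q where
  Ω := S.Ω
  inst := S.inst
  μ := S.μ
  prob := S.prob
  r := fun k ω => (S.θ k ω).1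
  s := fun k ω => (S.θ k ω).2.1
  meas_r := fun k => by
    letI := S.inst
    exact measurable_fst.comp (S.meas k)
  meas_s := fun k => by
    letI := S.inst
    exact (measurable_fst.comp measurable_snd).comp (S.meas k)
  markov_r := by
    letI := S.inst
    intro k a i
    rw [theta_r hP0 hQ0 hQ1 S k a i, ENNReal.toReal_mul, ENNReal.toReal_ofReal (hP0 _ _)]
  markov_s := by
    letI := S.inst
    intro k a i
    rw [theta_s hP0 hQ0 hP1 S k a i, ENNReal.toReal_mul, ENNReal.toReal_ofReal (hQ0 _ _)]
  indep := by
    letI := S.inst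
    haveI := S.prob
    refine indep_of_hist (fun k => measurable_fst.comp (S.meas k))
      (fun k => (measurable_fst.comp measurable_snd).comp (S.meas k)) ?_
    intro k ω0 ω1
    exact theta_prod hP0 hQ0 hP1 hQ1 S χ h0 _ _ k

lemma theta_next {NN MM T : ℕ} [NeZero T] {P : Matrix (Fin NN) (Fin NN) ℝ}
    {Q : Matrix (Fin MM) (Fin MM) ℝ} {f : Fin MM → Bool}
    (hP0 : ∀ i j, 0 ≤ P i j) (hQ0 : ∀ i j, 0 ≤ Q i j) (S : ThetaReal NN MM T P Q f) (k : ℕ) :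
    letI := S.inst
    ∀ᵐ ω ∂S.μ, S.θ (k + 1) ω = stepX f (S.θ k ω) (S.θ (k + 1) ω).1 (S.θ (k + 1) ω).2.1 := by
  classical
  letI := S.inst
  haveI := S.prob
  have hst := markov_step S.meas S.markov (pbar_nonneg hP0 hQ0 f) k (y := S.θ k)
    (fun ω ω' h => h k le_rfl)
    (fun χ' χ => if χ' = stepX f χ χ'.1 χ'.2.1 then 0 else 1)
  have hz : ∫⁻ ω, ∑ χ', ENNReal.ofReal (pbar P Q f (S.θ k ω) χ') *
      (if χ' = stepX f (S.θ k ω) χ'.1 χ'.2.1 then 0 else 1) ∂S.μ = 0 := by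
    rw [lintegral_eq_zero_of_ae_eq_zero]
    refine ae_of_all _ fun ω => ?_
    refine Finset.sum_eq_zero fun χ' _ => ?_
    rw [pbar_eq]
    split_ifs <;> simp
  rw [hz] at hst
  have hm : Measurable fun ω => (if S.θ (k + 1) ω
      = stepX f (S.θ k ω) (S.θ (k + 1) ω).1 (S.θ (k + 1) ω).2.1 then (0 : ENNReal) else 1) := by
    have : HistConst S.θ (k + 1) fun ω => (if S.θ (k + 1) ω
      = stepX f (S.θ k ω) (S.θ (k + 1) ω).1 (S.θ (k + 1) ω).2.1 then (0 : ENNReal) else 1) := by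
      intro ω ω' h
      show (if _ then _ else _) = _
      rw [h (k + 1) le_rfl, h k (by omega)]
    exact this.measurable fun l _ => S.meas l
  rw [lintegral_eq_zero_iff hm] at hst
  filter_upwards [hst] with ω hω
  by_contra h
  simp only [Pi.zero_apply] at hω
  rw [if_neg h] at hω
  exact one_ne_zero hω

lemma theta_rbar {NN MM T : ℕ} [NeZero T] {P : Matrix (Fin NN) (Fin NN) ℝ}
    {Q : Matrix (Fin MM) (Fin MM) ℝ} {f : Fin MM → Bool}
    (hP0 : ∀ i j, 0 ≤ P i j) (hQ0 : ∀ i j, 0 ≤ Q i j)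
    (S : ThetaReal NN MM T P Q f) (χ : XT NN MM T) (hχ : inX f χ)
    (h0 : letI := S.inst; ∀ᵐ ω ∂S.μ, S.θ 0 ω = χ) :
    letI := S.inst
    ∀ᵐ ω ∂S.μ, ∀ k, rbarProc (fun k ω => (S.θ k ω).1) (fun k ω => (S.θ k ω).2.1) f
      (-(χ.2.2.2.val : ℤ)) χ.2.2.1 k ω = S.θ k ω := by
  letI := S.inst
  have hn := ae_all_iff.2 (theta_next hP0 hQ0 S)
  filter_upwards [h0, hn] with ω hω hnω k
  induction k with
  | zero =>
    rw [rbar_zero, hω]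
    split_ifs with h
    · obtain ⟨h1, h2⟩ := hχ h
      obtain ⟨a, b, c, d⟩ := χ
      simp only at h1 h2 ⊢
      rw [h2, ← h1]
    · rw [neg_neg, intToFin_val]
  | succ k ih =>
    rw [rbar_succ, ih, ← hnω k]

lemma traj_congr {Ω S : Type} {n q : ℕ}
    (Amat : S → Matrix (Fin n) (Fin n) ℝ) (Emat : S → Matrix (Fin n) (Fin q) ℝ)
    (mode mode' : ℕ → Ω → S) (w w' : ℕ → Ω → Fin q → ℝ) (x0 : Fin n → ℝ) (ω ω' : Ω) (k : ℕ)
    (h : ∀ l < k, mode l ω = mode' l ω') (hw : ∀ l < k, w l ω = w' l ω') :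
    traj Amat Emat mode w x0 k ω = traj Amat Emat mode' w' x0 k ω' := by
  induction k with
  | zero => rfl
  | succ k ih =>
    simp only [traj]
    rw [ih (fun l hl => h l (by omega)) (fun l hl => hw l (by omega)), h k (by omega),
      hw k (by omega)]

section equiv
variable {NN MM T n m q ℓ : ℕ} [NeZero T]
    {P : Matrix (Fin NN) (Fin NN) ℝ} {Qm : Matrix (Fin MM) (Fin MM) ℝ} {f : Fin MM → Bool}
    {A : Fin NN → Matrix (Fin n) (Fin n) ℝ} {B : Fin NN → Matrix (Fin n) (Fin m) ℝ}
    {C : Fin NN → Matrix (Fin ℓ) (Fin n) ℝ} {D : Fin NN → Matrix (Fin ℓ) (Fin m) ℝ}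
    {E : Fin NN → Matrix (Fin n) (Fin q) ℝ}
    {K : Fin NN → Fin T → Matrix (Fin m) (Fin n) ℝ} {γ : ℝ}

lemma mss_of_bar (h : MeanSquareStableBar P Qm f A B E K) : MeanSquareStable P Qm f A B E K := by
  obtain ⟨c, hc, lam, h0, h1, H⟩ := h
  refine ⟨c, hc, lam, h0, h1, ?_⟩
  intro S τ₀ hτ σ₀ r₀ s₀ hini x0 k
  refine H (thetaOf S f τ₀ σ₀)
    (if f s₀ = true then (r₀, s₀, r₀, 0) else (r₀, s₀, σ₀, intToFin T (-τ₀))) ?_ ?_ x0 k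
  · split_ifs with hf
    · intro _
      exact ⟨rfl, rfl⟩
    · intro h'
      exact absurd h' hf
  · letI := S.inst
    show ∀ᵐ ω ∂S.μ, rbarProc S.r S.s f τ₀ σ₀ 0 ω = _
    filter_upwards [hini] with ω hω
    rw [rbar_zero, hω.1, hω.2]

lemma hinf_of_bar (h : HinfSqLtBar P Qm f A B C D E K γ) : HinfSqLtSigma P Qm f A B C D E K γ := by
  obtain ⟨c, hc, hcγ, H⟩ := h
  refine ⟨c, hc, hcγ, ?_⟩
  intro S τ₀ hτ σ₀ χ hχ hini w hw hw0 hwt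
  refine H (thetaOf S f τ₀ σ₀) χ hχ hini w (fun k => ?_) hw0 hwt
  refine (hw k).mono ?_ le_rfl
  refine iSup₂_le fun j hj => ?_
  have hle : MeasurableSpace.comap ((thetaOf (T := T) S f τ₀ σ₀).θ j) inferInstance
      ≤ sigFiltBar (thetaOf (T := T) S f τ₀ σ₀) k :=
    le_iSup₂ (f := fun j (_ : j ∈ Finset.range (k + 1)) =>
      MeasurableSpace.comap ((thetaOf (T := T) S f τ₀ σ₀).θ j) inferInstance) j hj
  refine le_trans ?_ hle
  refine sup_le ?_ ?_
  · rintro _ ⟨t, ht, rfl⟩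
    exact ⟨Prod.fst ⁻¹' t, measurable_fst ht, rfl⟩
  · rintro _ ⟨t, ht, rfl⟩
    exact ⟨(fun z : XT NN MM T => z.2.1) ⁻¹' t, (measurable_fst.comp measurable_snd) ht, rfl⟩

lemma bar_of_mss (hP0 : ∀ i j, 0 ≤ P i j) (hP1 : ∀ i, ∑ j, P i j = 1)
    (hQ0 : ∀ i j, 0 ≤ Qm i j) (hQ1 : ∀ i, ∑ j, Qm i j = 1)
    (h : MeanSquareStable P Qm f A B E K) : MeanSquareStableBar P Qm f A B E K := by
  obtain ⟨c, hc, lam, h0, h1, H⟩ := h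
  refine ⟨c, hc, lam, h0, h1, ?_⟩
  intro S χ hχ hini x0 k
  letI := S.inst
  have hb := theta_rbar hP0 hQ0 S χ hχ hini
  have := H (mjlsOf hP0 hQ0 hP1 hQ1 S χ hini) (-(χ.2.2.2.val : ℤ)) (by omega) χ.2.2.1 χ.1 χ.2.1
    (by
      show ∀ᵐ ω ∂S.μ, (S.θ 0 ω).1 = χ.1 ∧ (S.θ 0 ω).2.1 = χ.2.1
      filter_upwards [hini] with ω hω
      rw [hω]
      exact ⟨rfl, rfl⟩) x0 k
  refine le_trans (le_of_eq ?_) this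
  refine lintegral_congr_ae ?_
  filter_upwards [hb] with ω hω
  congr 1
  exact traj_congr _ _ _ _ _ _ _ _ _ _ (fun l _ => (hω l).symm) (fun l _ => rfl)

lemma bar_of_hinf (hP0 : ∀ i j, 0 ≤ P i j) (hP1 : ∀ i, ∑ j, P i j = 1)
    (hQ0 : ∀ i j, 0 ≤ Qm i j) (hQ1 : ∀ i, ∑ j, Qm i j = 1)
    (h : HinfSqLtSigma P Qm f A B C D E K γ) : HinfSqLtBar P Qm f A B C D E K γ := by
  obtain ⟨c, hc, hcγ, H⟩ := h
  refine ⟨c, hc, hcγ, ?_⟩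
  intro S χ hχ hini w hw hw0 hwt
  letI := S.inst
  have hb := theta_rbar hP0 hQ0 S χ hχ hini
  have hhist : ∀ k, HistConst S.θ k (w k) := fun k => HistConst.of_measurable (hw k)
  choose W hW using fun k => (hhist k).factor
  set rb : ℕ → S.Ω → XT NN MM T := rbarProc (fun k ω => (S.θ k ω).1) (fun k ω => (S.θ k ω).2.1) f
      (-(χ.2.2.2.val : ℤ)) χ.2.2.1 with hrb
  set w' : ℕ → S.Ω → Fin q → ℝ := fun k ω => W k (histOf rb k ω) with hw'
  have hae : ∀ᵐ ω ∂S.μ, ∀ k, w' k ω = w k ω := by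
    filter_upwards [hb] with ω hω k
    rw [hW k ω]
    show W k (histOf rb k ω) = _
    congr 1
    funext l
    exact hω l
  have hsum : ∑' k : ℕ, ∫⁻ ω, sqE (w' k ω) ∂S.μ = ∑' k : ℕ, ∫⁻ ω, sqE (w k ω) ∂S.μ := by
    refine tsum_congr fun k => lintegral_congr_ae ?_
    filter_upwards [hae] with ω hω
    rw [hω k]
  have := H (mjlsOf hP0 hQ0 hP1 hQ1 S χ hini) (-(χ.2.2.2.val : ℤ)) (by omega) χ.2.2.1 χ hχ
    (by
      show ∀ᵐ ω ∂S.μ, rb 0 ω = χ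
      filter_upwards [hb, hini] with ω hω hω'
      rw [hω 0, hω']) w' (fun k => by
      have hhc : HistConst (fun l ω => ((S.θ l ω).1, (S.θ l ω).2.1)) k (w' k) := by
        intro ω ω' hh
        show W k (histOf rb k ω) = W k (histOf rb k ω')
        congr 1
        funext l
        exact rbar_hist (fun k ω => (S.θ k ω).1) (fun k ω => (S.θ k ω).2.1) f _ _ l ω ω'
          fun l' hl' => hh l' (by omega)
      refine HistConst.measurable hhc fun l hl => ?_
      have hle : MeasurableSpace.comap ((mjlsOf hP0 hQ0 hP1 hQ1 S χ hini).r l) inferInstance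
          ⊔ MeasurableSpace.comap ((mjlsOf hP0 hQ0 hP1 hQ1 S χ hini).s l) inferInstance
          ≤ sigFiltSigma (mjlsOf hP0 hQ0 hP1 hQ1 S χ hini) k :=
        le_iSup₂ (f := fun j (_ : j ∈ Finset.range (k + 1)) =>
          MeasurableSpace.comap ((mjlsOf hP0 hQ0 hP1 hQ1 S χ hini).r j) inferInstance
          ⊔ MeasurableSpace.comap ((mjlsOf hP0 hQ0 hP1 hQ1 S χ hini).s j) inferInstance) l
          (Finset.mem_range.2 (by omega))
      refine Measurable.prodMk ?_ ?_
      · intro t ht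
        exact hle _ (le_sup_left (a := MeasurableSpace.comap
          ((mjlsOf hP0 hQ0 hP1 hQ1 S χ hini).r l) inferInstance) _ ⟨t, ht, rfl⟩)
      · intro t ht
        exact hle _ (le_sup_right (a := MeasurableSpace.comap
          ((mjlsOf hP0 hQ0 hP1 hQ1 S χ hini).r l) inferInstance) _ ⟨t, ht, rfl⟩))
    (by
      show 0 < ∑' k : ℕ, ∫⁻ ω, sqE (w' k ω) ∂S.μ
      rw [hsum]; exact hw0)
    (by
      show ∑' k : ℕ, ∫⁻ ω, sqE (w' k ω) ∂S.μ ≠ ⊤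
      rw [hsum]; exact hwt)
  have e2 : ENNReal.ofReal c * ∑' k : ℕ, ∫⁻ ω, sqE (w' k ω) ∂S.μ
      = ENNReal.ofReal c * ∑' k : ℕ, ∫⁻ ω, sqE (w k ω) ∂S.μ := by rw [hsum]
  refine le_trans (le_of_eq ?_) (this.trans (le_of_eq e2))
  refine tsum_congr fun k => lintegral_congr_ae ?_
  filter_upwards [hb, hae] with ω hω hω'
  show sqE _ = sqE ((CKmat C D K (rb k ω)).mulVec _)
  rw [hω k]
  congr 2
  exact traj_congr _ _ _ _ _ _ _ _ _ _ (fun l _ => (hω l).symm) (fun l _ => (hω' l).symm)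

end equiv

section lyap
variable {NN MM T n m q ℓ : ℕ} [NeZero T]
    {P : Matrix (Fin NN) (Fin NN) ℝ} {Qm : Matrix (Fin MM) (Fin MM) ℝ} {f : Fin MM → Bool}
    {A : Fin NN → Matrix (Fin n) (Fin n) ℝ} {B : Fin NN → Matrix (Fin n) (Fin m) ℝ}
    {C : Fin NN → Matrix (Fin ℓ) (Fin n) ℝ} {D : Fin NN → Matrix (Fin ℓ) (Fin m) ℝ}
    {E : Fin NN → Matrix (Fin n) (Fin q) ℝ}
    {K : Fin NN → Fin T → Matrix (Fin m) (Fin n) ℝ} {γ : ℝ}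

lemma traj_hist {Ω S : Type}
    (Amat : S → Matrix (Fin n) (Fin n) ℝ) (Emat : S → Matrix (Fin n) (Fin q) ℝ)
    (mode : ℕ → Ω → S) (w : ℕ → Ω → Fin q → ℝ) (x0 : Fin n → ℝ)
    (hw : ∀ k, HistConst mode k (w k)) (k : ℕ) :
    HistConst mode k (traj Amat Emat mode w x0 (k + 1)) := by
  intro ω ω' h
  refine traj_congr _ _ _ _ _ _ _ _ _ _ (fun l hl => h l (by omega)) fun l hl => ?_
  exact hw l ω ω' fun l' hl' => h l' (by omega)

lemma traj_hist' {Ω S : Type}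
    (Amat : S → Matrix (Fin n) (Fin n) ℝ) (Emat : S → Matrix (Fin n) (Fin q) ℝ)
    (mode : ℕ → Ω → S) (w : ℕ → Ω → Fin q → ℝ) (x0 : Fin n → ℝ)
    (hw : ∀ k, HistConst mode k (w k)) (k : ℕ) :
    HistConst mode k (traj Amat Emat mode w x0 k) := by
  intro ω ω' h
  refine traj_congr _ _ _ _ _ _ _ _ _ _ (fun l hl => h l (by omega)) fun l hl => ?_
  exact hw l ω ω' fun l' hl' => h l' (by omega)

lemma EV_step (hP0 : ∀ i j, 0 ≤ P i j) (hQ0 : ∀ i j, 0 ≤ Qm i j)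
    {V : XT NN MM T → (Fin n → ℝ) → ℝ} (hV : ∀ χ x, 0 ≤ V χ x)
    (S : ThetaReal NN MM T P Qm f) (w : ℕ → S.Ω → Fin q → ℝ) (x0 : Fin n → ℝ)
    (hw : ∀ k, HistConst S.θ k (w k)) (k : ℕ) :
    letI := S.inst
    ∫⁻ ω, ENNReal.ofReal (V (S.θ (k + 1) ω)
        (traj (AKmat A B K) (fun χ' => E χ'.1) S.θ w x0 (k + 1) ω)) ∂S.μ
      = ∫⁻ ω, ENNReal.ofReal (∑ χ', pbar P Qm f (S.θ k ω) χ' * V χ'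
        ((AKmat A B K (S.θ k ω)).mulVec (traj (AKmat A B K) (fun χ' => E χ'.1) S.θ w x0 k ω)
          + (E (S.θ k ω).1).mulVec (w k ω))) ∂S.μ := by
  letI := S.inst
  haveI := S.prob
  have h1 := markov_step S.meas S.markov (pbar_nonneg hP0 hQ0 f) k
    (traj_hist (AKmat A B K) (fun χ' => E χ'.1) S.θ w x0 hw k)
    (fun χ' x => ENNReal.ofReal (V χ' x))
  rw [h1]
  refine lintegral_congr fun ω => ?_
  rw [ENNReal.ofReal_sum_of_nonneg
    (fun χ' _ => mul_nonneg (pbar_nonneg hP0 hQ0 f _ _) (hV _ _))]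
  refine Finset.sum_congr rfl fun χ' _ => ?_
  rw [ENNReal.ofReal_mul (pbar_nonneg hP0 hQ0 f _ _)]
  rfl

lemma mss_of_lyap (hP0 : ∀ i j, 0 ≤ P i j) (hQ0 : ∀ i j, 0 ≤ Qm i j)
    {V : XT NN MM T → (Fin n → ℝ) → ℝ} (hV : ∀ χ x, 0 ≤ V χ x) {ε c1 c2 : ℝ}
    (hε : 0 < ε) (hε1 : ε ≤ 1) (hc1 : 0 < c1) (hc2 : 0 < c2)
    (hV1 : ∀ χ, inX f χ → ∀ x, ∑ i, x i ^ 2 ≤ c1 * V χ x)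
    (hV2 : ∀ χ, inX f χ → ∀ x, V χ x ≤ c2 * ∑ i, x i ^ 2)
    (hL : ∀ χ, inX f χ → ∀ (x : Fin n → ℝ) (w : Fin q → ℝ),
      ∑ χ', pbar P Qm f χ χ' * V χ' ((AKmat A B K χ).mulVec x + (E χ.1).mulVec w)
        + ∑ i, ((CKmat C D K χ).mulVec x) i ^ 2 + ε * (V χ x + ∑ i, w i ^ 2)
        ≤ V χ x + γ * ∑ i, w i ^ 2) :
    MeanSquareStableBar P Qm f A B E K := by
  refine ⟨c1 * c2, mul_pos hc1 hc2, 1 - ε, by linarith, by linarith, ?_⟩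
  intro S χ hχ hini x0 k
  letI := S.inst
  haveI := S.prob
  have h1ε : 0 ≤ 1 - ε := by linarith
  have hEV : ∀ k, ∫⁻ ω, ENNReal.ofReal (V (S.θ k ω)
        (traj (AKmat A B K) (fun χ' => E χ'.1) S.θ (fun _ _ => 0) x0 k ω)) ∂S.μ
        ≤ ENNReal.ofReal ((1 - ε) ^ k * (c2 * ∑ i, x0 i ^ 2)) := by
    intro k
    induction k with
    | zero =>
      rw [pow_zero, one_mul]
      calc _ ≤ ∫⁻ ω, ENNReal.ofReal (c2 * ∑ i, x0 i ^ 2) ∂S.μ :=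
            lintegral_mono fun ω => ENNReal.ofReal_le_ofReal (hV2 _ (S.mem 0 ω) _)
        _ = _ := by simp
    | succ k ih =>
      rw [EV_step hP0 hQ0 hV S (fun _ _ => 0) x0 (fun _ _ _ _ => rfl) k]
      calc _ ≤ ∫⁻ ω, ENNReal.ofReal (1 - ε) * ENNReal.ofReal (V (S.θ k ω)
            (traj (AKmat A B K) (fun χ' => E χ'.1) S.θ (fun _ _ => 0) x0 k ω)) ∂S.μ := by
              refine lintegral_mono fun ω => ?_
              rw [← ENNReal.ofReal_mul h1ε]
              refine ENNReal.ofReal_le_ofReal ?_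
              have h2 := hL _ (S.mem k ω)
                (traj (AKmat A B K) (fun χ' => E χ'.1) S.θ (fun _ _ => 0) x0 k ω) 0
              have h3 : 0 ≤ ∑ i, ((CKmat C D K (S.θ k ω)).mulVec
                (traj (AKmat A B K) (fun χ' => E χ'.1) S.θ (fun _ _ => 0) x0 k ω)) i ^ 2 :=
                Finset.sum_nonneg fun i _ => sq_nonneg _
              simp only [Pi.zero_apply, ne_eq, OfNat.ofNat_ne_zero, not_false_eq_true, zero_pow,
                Finset.sum_const_zero, mul_zero, add_zero] at h2
              show ∑ χ', pbar P Qm f (S.θ k ω) χ' * V χ' (_ + (E (S.θ k ω).1).mulVec 0) ≤ _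
              linarith
        _ = ENNReal.ofReal (1 - ε) * ∫⁻ ω, ENNReal.ofReal (V (S.θ k ω)
            (traj (AKmat A B K) (fun χ' => E χ'.1) S.θ (fun _ _ => 0) x0 k ω)) ∂S.μ :=
              lintegral_const_mul' _ _ ENNReal.ofReal_ne_top
        _ ≤ ENNReal.ofReal (1 - ε) * ENNReal.ofReal ((1 - ε) ^ k * (c2 * ∑ i, x0 i ^ 2)) := by
              gcongr
        _ = _ := by
              rw [← ENNReal.ofReal_mul h1ε]
              congr 1
              ring
  calc _ ≤ ∫⁻ ω, ENNReal.ofReal c1 * ENNReal.ofReal (V (S.θ k ω)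
            (traj (AKmat A B K) (fun χ' => E χ'.1) S.θ (fun _ _ => 0) x0 k ω)) ∂S.μ := by
        refine lintegral_mono fun ω => ?_
        rw [← ENNReal.ofReal_mul hc1.le]
        exact ENNReal.ofReal_le_ofReal (hV1 _ (S.mem k ω) _)
    _ = ENNReal.ofReal c1 * ∫⁻ ω, ENNReal.ofReal (V (S.θ k ω)
            (traj (AKmat A B K) (fun χ' => E χ'.1) S.θ (fun _ _ => 0) x0 k ω)) ∂S.μ :=
        lintegral_const_mul' _ _ ENNReal.ofReal_ne_top
    _ ≤ ENNReal.ofReal c1 * ENNReal.ofReal ((1 - ε) ^ k * (c2 * ∑ i, x0 i ^ 2)) := by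
        gcongr
        exact hEV k
    _ = _ := by
        rw [← ENNReal.ofReal_mul hc1.le]
        congr 1
        ring

lemma hinf_of_lyap (hP0 : ∀ i j, 0 ≤ P i j) (hQ0 : ∀ i j, 0 ≤ Qm i j)
    {V : XT NN MM T → (Fin n → ℝ) → ℝ} (hV : ∀ χ x, 0 ≤ V χ x) {ε : ℝ}
    (hε : 0 < ε) (hεγ : ε ≤ γ) (hV0 : ∀ χ, V χ 0 = 0)
    (hL : ∀ χ, inX f χ → ∀ (x : Fin n → ℝ) (w : Fin q → ℝ),
      ∑ χ', pbar P Qm f χ χ' * V χ' ((AKmat A B K χ).mulVec x + (E χ.1).mulVec w)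
        + ∑ i, ((CKmat C D K χ).mulVec x) i ^ 2 + ε * (V χ x + ∑ i, w i ^ 2)
        ≤ V χ x + γ * ∑ i, w i ^ 2) :
    HinfSqLtBar P Qm f A B C D E K γ := by
  refine ⟨γ - ε, by linarith, by linarith, ?_⟩
  intro S χ hχ hini w hw _ _
  letI := S.inst
  haveI := S.prob
  have hh : ∀ k, HistConst S.θ k (w k) := fun k => HistConst.of_measurable (hw k)
  have hγε : 0 ≤ γ - ε := by linarith
  set x := traj (AKmat A B K) (fun χ' => E χ'.1) S.θ w 0 with hx
  have hstep : ∀ k, ∫⁻ ω, ENNReal.ofReal (V (S.θ (k + 1) ω) (x (k + 1) ω)) ∂S.μ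
      + ∫⁻ ω, sqE ((CKmat C D K (S.θ k ω)).mulVec (x k ω)) ∂S.μ
      ≤ ∫⁻ ω, ENNReal.ofReal (V (S.θ k ω) (x k ω)) ∂S.μ
        + ENNReal.ofReal (γ - ε) * ∫⁻ ω, sqE (w k ω) ∂S.μ := by
    intro k
    have m1 : Measurable fun ω => sqE ((CKmat C D K (S.θ k ω)).mulVec (x k ω)) := by
      have : HistConst S.θ k fun ω => sqE ((CKmat C D K (S.θ k ω)).mulVec (x k ω)) := by
        intro ω ω' h
        show sqE _ = sqE _
        rw [h k le_rfl, hx, traj_hist' _ _ S.θ w 0 hh k ω ω' h]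
      exact this.measurable fun l _ => S.meas l
    have m2 : Measurable fun ω => ENNReal.ofReal (γ - ε) * sqE (w k ω) := by
      have : HistConst S.θ k fun ω => ENNReal.ofReal (γ - ε) * sqE (w k ω) := by
        intro ω ω' h
        show _ * sqE _ = _ * sqE _
        rw [hh k ω ω' h]
      exact this.measurable fun l _ => S.meas l
    rw [hx, EV_step hP0 hQ0 hV S w 0 hh k, ← hx, ← lintegral_add_right _ m1,
      ← lintegral_const_mul' _ _ ENNReal.ofReal_ne_top, ← lintegral_add_right _ m2]
    refine lintegral_mono fun ω => ?_
    have h2 := hL _ (S.mem k ω) (x k ω) (w k ω)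
    have h3 : 0 ≤ ∑ i, ((CKmat C D K (S.θ k ω)).mulVec (x k ω)) i ^ 2 :=
      Finset.sum_nonneg fun i _ => sq_nonneg _
    have h4 : 0 ≤ ∑ i, w k ω i ^ 2 := Finset.sum_nonneg fun i _ => sq_nonneg _
    unfold sqE
    rw [← ENNReal.ofReal_mul hγε, ← ENNReal.ofReal_add _ h3,
      ← ENNReal.ofReal_add (hV _ _) (mul_nonneg hγε h4)]
    · refine ENNReal.ofReal_le_ofReal ?_
      have h5 := mul_nonneg hε.le (hV (S.θ k ω) (x k ω))
      linarith
    · exact Finset.sum_nonneg fun χ' _ => mul_nonneg (pbar_nonneg hP0 hQ0 f _ _) (hV _ _)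
  have hsum : ∀ N, ∫⁻ ω, ENNReal.ofReal (V (S.θ N ω) (x N ω)) ∂S.μ
      + ∑ k ∈ Finset.range N, ∫⁻ ω, sqE ((CKmat C D K (S.θ k ω)).mulVec (x k ω)) ∂S.μ
      ≤ ENNReal.ofReal (γ - ε) * ∑ k ∈ Finset.range N, ∫⁻ ω, sqE (w k ω) ∂S.μ := by
    intro N
    induction N with
    | zero =>
      have : ∀ ω, x 0 ω = 0 := fun ω => rfl
      simp [this, hV0]
    | succ N ih =>
      rw [Finset.sum_range_succ, Finset.sum_range_succ, mul_add]
      calc _ = (∫⁻ ω, ENNReal.ofReal (V (S.θ (N + 1) ω) (x (N + 1) ω)) ∂S.μ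
            + ∫⁻ ω, sqE ((CKmat C D K (S.θ N ω)).mulVec (x N ω)) ∂S.μ)
            + ∑ k ∈ Finset.range N,
              ∫⁻ ω, sqE ((CKmat C D K (S.θ k ω)).mulVec (x k ω)) ∂S.μ := by ring
        _ ≤ _ := add_le_add_left (hstep N) _
        _ = (∫⁻ ω, ENNReal.ofReal (V (S.θ N ω) (x N ω)) ∂S.μ
            + ∑ k ∈ Finset.range N,
              ∫⁻ ω, sqE ((CKmat C D K (S.θ k ω)).mulVec (x k ω)) ∂S.μ)
            + ENNReal.ofReal (γ - ε) * ∫⁻ ω, sqE (w N ω) ∂S.μ := by ring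
        _ ≤ _ := add_le_add_left ih _
  refine ENNReal.tsum_le_of_sum_range_le fun N => ?_
  calc _ ≤ _ := le_add_self
    _ ≤ _ := hsum N
    _ ≤ _ := by
      gcongr
      exact ENNReal.sum_le_tsum _
end lyap

lemma quad_dom {F : Type} [NormedAddCommGroup F] [NormedSpace ℝ F] [FiniteDimensional ℝ F]
    (g h : F → ℝ) (hg : Continuous g) (hh : Continuous h)
    (hg2 : ∀ (t : ℝ) x, g (t • x) = t ^ 2 * g x) (hh2 : ∀ (t : ℝ) x, h (t • x) = t ^ 2 * h x)
    (hpos : ∀ x, x ≠ 0 → 0 < g x) : ∃ ε > 0, ∀ x, ε * h x ≤ g x := by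
  have hc : IsCompact (Metric.sphere (0 : F) 1) :=
    haveI := FiniteDimensional.proper ℝ F
    isCompact_sphere 0 1
  have hs : ∃ ε > 0, ∀ x ∈ Metric.sphere (0 : F) 1, ε * h x ≤ g x := by
    rcases (Metric.sphere (0 : F) 1).eq_empty_or_nonempty with he | hne
    · exact ⟨1, one_pos, by simp [he]⟩
    obtain ⟨x1, hx1, hmin⟩ := hc.exists_isMinOn hne hg.continuousOn
    obtain ⟨x2, hx2, hmax⟩ := hc.exists_isMaxOn hne hh.continuousOn
    have hx1' : x1 ≠ 0 := by
      rintro rfl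
      simp at hx1
    have h1 := hpos x1 hx1'
    have hM : 0 < |h x2| + 1 := by positivity
    refine ⟨g x1 / (|h x2| + 1), div_pos h1 hM, fun x hx => ?_⟩
    have a1 : g x1 ≤ g x := hmin hx
    have a2 : h x ≤ h x2 := hmax hx
    have a3 : h x ≤ |h x2| + 1 := by linarith [le_abs_self (h x2)]
    calc g x1 / (|h x2| + 1) * h x ≤ g x1 / (|h x2| + 1) * (|h x2| + 1) := by gcongr
      _ = g x1 := by field_simp
      _ ≤ g x := a1
  obtain ⟨ε, hε, H⟩ := hs
  refine ⟨ε, hε, fun x => ?_⟩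
  by_cases hx : x = 0
  · have e1 := hg2 0 x
    have e2 := hh2 0 x
    rw [zero_smul] at e1 e2
    rw [hx, e1, e2]
    simp
  · have hn : 0 < ‖x‖ := norm_pos_iff.2 hx
    have h1 := H (‖x‖⁻¹ • x) (by
      rw [mem_sphere_zero_iff_norm, norm_smul, norm_inv, norm_norm, inv_mul_cancel₀ hn.ne'])
    rw [hg2, hh2] at h1
    have h2 : 0 < (‖x‖⁻¹) ^ 2 := by positivity
    nlinarith

lemma exists_unif {ι : Type} [Finite ι] (p : ι → Prop) (e : ι → ℝ) (he : ∀ i, p i → 0 < e i) :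
    ∃ ε > 0, ∀ i, p i → ε ≤ e i := by
  have h1 : ∀ᶠ ε : ℝ in nhdsWithin 0 (Set.Ioi 0), ∀ i, p i → ε ≤ e i := by
    rw [Filter.eventually_all]
    intro i
    by_cases hi : p i
    · have := Ioc_mem_nhdsGT (he i hi)
      filter_upwards [this] with ε hε _
      exact hε.2
    · exact Filter.Eventually.of_forall fun _ h => absurd h hi
  have h2 : ∀ᶠ ε : ℝ in nhdsWithin 0 (Set.Ioi 0), 0 < ε := self_mem_nhdsWithin
  obtain ⟨ε, h3, h4⟩ := (h1.and h2).exists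
  exact ⟨ε, h4, h3⟩

lemma quad_smul {n : ℕ} (M : Matrix (Fin n) (Fin n) ℝ) (t : ℝ) (x : Fin n → ℝ) :
    (t • x) ⬝ᵥ (M *ᵥ (t • x)) = t ^ 2 * (x ⬝ᵥ (M *ᵥ x)) := by
  rw [mulVec_smul, smul_dotProduct, dotProduct_smul, smul_eq_mul, smul_eq_mul]
  ring

lemma quad_cont {n : ℕ} (M : Matrix (Fin n) (Fin n) ℝ) :
    Continuous fun x : Fin n → ℝ => x ⬝ᵥ (M *ᵥ x) := by
  fun_prop

lemma pd_pos {ι : Type} [Fintype ι] {M : Matrix ι ι ℝ} (hM : M.PosDef) {x : ι → ℝ} (hx : x ≠ 0) :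
    0 < x ⬝ᵥ (M *ᵥ x) := by
  have := hM.dotProduct_mulVec_pos hx
  simpa using this

lemma pd_nonneg {ι : Type} [Fintype ι] {M : Matrix ι ι ℝ} (hM : M.PosDef) (x : ι → ℝ) :
    0 ≤ x ⬝ᵥ (M *ᵥ x) := by
  by_cases hx : x = 0
  · simp [hx]
  · exact (pd_pos hM hx).le

lemma quad_transpose {n : ℕ} (M : Matrix (Fin n) (Fin n) ℝ) (x y : Fin n → ℝ) :
    x ⬝ᵥ (Mᵀ *ᵥ y) = y ⬝ᵥ (M *ᵥ x) := by
  rw [mulVec_transpose, dotProduct_comm, dotProduct_mulVec]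

lemma young {n : ℕ} {X : Matrix (Fin n) (Fin n) ℝ} (hX : X.PosDef) (u x : Fin n → ℝ) :
    2 * (u ⬝ᵥ x) - u ⬝ᵥ (X *ᵥ u) ≤ x ⬝ᵥ (X⁻¹ *ᵥ x) := by
  have h := pd_nonneg hX (u - X⁻¹ *ᵥ x)
  have hdet : IsUnit X.det := (Matrix.isUnit_iff_isUnit_det _).1 hX.isUnit
  have hXX : X *ᵥ (X⁻¹ *ᵥ x) = x := by
    rw [mulVec_mulVec, mul_nonsing_inv _ hdet, one_mulVec]
  have hsym : Xᵀ = X := by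
    have := hX.isHermitian
    simpa [IsHermitian] using this
  have h2 : (X⁻¹ *ᵥ x) ⬝ᵥ (X *ᵥ u) = u ⬝ᵥ x := by
    rw [← quad_transpose, hsym, hXX]
  rw [mulVec_sub, hXX, sub_dotProduct, dotProduct_sub, dotProduct_sub, h2,
    dotProduct_comm (X⁻¹ *ᵥ x) x] at h
  linarith

lemma block_X {n : ℕ} {Z H X : Matrix (Fin n) (Fin n) ℝ}
    (h : (Matrix.fromBlocks Z Hᵀ H X).PosDef) : X.PosDef := by
  refine PosDef.of_dotProduct_mulVec_pos ?_ ?_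
  · exact (isHermitian_fromBlocks_iff.1 h.isHermitian).2.2.2
  · intro x hx
    have := pd_pos h (x := Sum.elim 0 x) (by
      intro h0
      apply hx
      funext i
      exact congrFun h0 (Sum.inr i))
    rw [fromBlocks_mulVec, sumElim_dotProduct_sumElim] at this
    simpa using this

lemma block_ineq {n : ℕ} {Z H X : Matrix (Fin n) (Fin n) ℝ}
    (h : (Matrix.fromBlocks Z Hᵀ H X).PosDef) (v : Fin n → ℝ) :
    (H *ᵥ v) ⬝ᵥ (X⁻¹ *ᵥ (H *ᵥ v)) ≤ v ⬝ᵥ (Z *ᵥ v) := by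
  have hX := block_X h
  have hdet : IsUnit X.det := (Matrix.isUnit_iff_isUnit_det _).1 hX.isUnit
  have hn := pd_nonneg h (Sum.elim v (-(X⁻¹ *ᵥ (H *ᵥ v))))
  have hXX : X *ᵥ (X⁻¹ *ᵥ (H *ᵥ v)) = H *ᵥ v := by
    rw [mulVec_mulVec, mul_nonsing_inv _ hdet, one_mulVec]
  rw [fromBlocks_mulVec, sumElim_dotProduct_sumElim] at hn
  simp only [Sum.elim_comp_inl, Sum.elim_comp_inr, mulVec_neg, hXX, add_neg_cancel,
    dotProduct_zero, add_zero, dotProduct_add, dotProduct_neg, quad_transpose] at hn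
  rw [dotProduct_comm (X⁻¹ *ᵥ (H *ᵥ v))] at hn
  linarith

lemma inj_of_pos {n : ℕ} {G : Matrix (Fin n) (Fin n) ℝ}
    (h : ∀ u, u ≠ 0 → u ⬝ᵥ (G *ᵥ u) ≠ 0) (x : Fin n → ℝ) : ∃ u, G *ᵥ u = x := by
  have hinj : Function.Injective G.mulVec := by
    intro a b hab
    by_contra hne
    apply h (a - b) (sub_ne_zero.2 hne)
    rw [mulVec_sub, show G *ᵥ a = G *ᵥ b from hab, sub_self, dotProduct_zero]
  have hu : IsUnit G := mulVec_injective_iff_isUnit.1 hinj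
  exact (mulVec_surjective_iff_isUnit.2 hu) x

lemma hinf_expand {n q ℓ : ℕ} (γ : ℝ) (D1 D3 : Matrix (Fin n) (Fin n) ℝ)
    (B31 : Matrix (Fin n) (Fin n) ℝ) (B32 : Matrix (Fin n) (Fin q) ℝ)
    (B41 : Matrix (Fin ℓ) (Fin n) ℝ) (u v : Fin n → ℝ) (w : Fin q → ℝ) (z : Fin ℓ → ℝ) :
    (Sum.elim (Sum.elim u w) (Sum.elim v z)) ⬝ᵥ
      (hinfBlock γ D1 D3 B31 B32 B41 *ᵥ (Sum.elim (Sum.elim u w) (Sum.elim v z)))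
    = u ⬝ᵥ (D1 *ᵥ u) + γ * (w ⬝ᵥ w) + v ⬝ᵥ (D3 *ᵥ v) + z ⬝ᵥ z
      + 2 * (v ⬝ᵥ (B31 *ᵥ u)) + 2 * (v ⬝ᵥ (B32 *ᵥ w)) + 2 * (z ⬝ᵥ (B41 *ᵥ u)) := by
  have t1 : u ⬝ᵥ (B31ᵀ *ᵥ v) = v ⬝ᵥ (B31 *ᵥ u) := quad_transpose _ _ _
  have t2 : u ⬝ᵥ (B41ᵀ *ᵥ z) = z ⬝ᵥ (B41 *ᵥ u) := by
    rw [mulVec_transpose, dotProduct_comm, dotProduct_mulVec]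
  have t3 : w ⬝ᵥ (B32ᵀ *ᵥ v) = v ⬝ᵥ (B32 *ᵥ w) := by
    rw [mulVec_transpose, dotProduct_comm, dotProduct_mulVec]
  unfold hinfBlock
  simp only [fromBlocks_mulVec, sumElim_dotProduct_sumElim, Sum.elim_comp_inl, Sum.elim_comp_inr,
    zero_mulVec, add_zero, zero_add, smul_mulVec, one_mulVec, dotProduct_add, dotProduct_smul,
    smul_eq_mul, t1, t2, t3, Sum.elim_add_add]
  ring

lemma dot_sq {d : ℕ} (w : Fin d → ℝ) : w ⬝ᵥ w = ∑ i, w i ^ 2 := by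
  simp [dotProduct, sq]

open Classical in
lemma lmi_ineq {NN MM T n q ℓ : ℕ} [NeZero T]
    {P : Matrix (Fin NN) (Fin NN) ℝ} {Qm : Matrix (Fin MM) (Fin MM) ℝ} {f : Fin MM → Bool}
    (hP0 : ∀ i j, 0 ≤ P i j) (hQ0 : ∀ i j, 0 ≤ Qm i j) {γ : ℝ}
    {AK : Matrix (Fin n) (Fin n) ℝ} {CK : Matrix (Fin ℓ) (Fin n) ℝ} {EK : Matrix (Fin n) (Fin q) ℝ}
    {G H : Matrix (Fin n) (Fin n) ℝ} {X : XT NN MM T → Matrix (Fin n) (Fin n) ℝ}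
    {Z : XT NN MM T → XT NN MM T → Matrix (Fin n) (Fin n) ℝ} {χ : XT NN MM T}
    (hX : (X χ).PosDef)
    (h1 : (hinfBlock γ (G + Gᵀ - X χ) (H + Hᵀ - Fop P Qm f Z χ)
              (AK * G) EK (CK * G)).PosDef)
    (h2 : ∀ χ', inX f χ' → (Matrix.fromBlocks (Z χ χ') Hᵀ H (X χ')).PosDef)
    (x : Fin n → ℝ) (w : Fin q → ℝ) (hxw : (x, w) ≠ 0) :
    0 < x ⬝ᵥ ((X χ)⁻¹ *ᵥ x) + γ * (w ⬝ᵥ w) - (CK *ᵥ x) ⬝ᵥ (CK *ᵥ x)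
      - ∑ χ', pbar P Qm f χ χ' * (if inX f χ' then
        (AK *ᵥ x + EK *ᵥ w) ⬝ᵥ ((X χ')⁻¹ *ᵥ (AK *ᵥ x + EK *ᵥ w)) else 0) := by
  -- the quadratic form of `F̄`
  have hF : ∀ v, ∑ χ', pbar P Qm f χ χ' * (if inX f χ' then
        (H *ᵥ v) ⬝ᵥ ((X χ')⁻¹ *ᵥ (H *ᵥ v)) else 0) ≤ v ⬝ᵥ (Fop P Qm f Z χ *ᵥ v) := by
    intro v
    have e : v ⬝ᵥ (Fop P Qm f Z χ *ᵥ v)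
        = ∑ χ', pbar P Qm f χ χ' * (if inX f χ' then v ⬝ᵥ (Z χ χ' *ᵥ v) else 0) := by
      unfold Fop
      rw [sum_mulVec, dotProduct_sum]
      refine Finset.sum_congr rfl fun χ' _ => ?_
      split_ifs
      · rw [smul_mulVec, dotProduct_smul, smul_eq_mul]
      · simp
    rw [e]
    refine Finset.sum_le_sum fun χ' _ => mul_le_mul_of_nonneg_left ?_ (pbar_nonneg hP0 hQ0 f _ _)
    split_ifs with hi
    · exact block_ineq (h2 χ' hi) v
    · exact le_rfl
  have hF0 : ∀ v, 0 ≤ v ⬝ᵥ (Fop P Qm f Z χ *ᵥ v) := by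
    intro v
    refine le_trans (Finset.sum_nonneg fun χ' _ => mul_nonneg (pbar_nonneg hP0 hQ0 f _ _) ?_) (hF v)
    split_ifs with hi
    · exact pd_nonneg (block_X (h2 χ' hi)).inv _
    · exact le_rfl
  have key : ∀ (u v : Fin n → ℝ) (w : Fin q → ℝ) (z : Fin ℓ → ℝ), (u ≠ 0 ∨ v ≠ 0 ∨ w ≠ 0) →
      0 < 2 * (u ⬝ᵥ (G *ᵥ u)) - u ⬝ᵥ (X χ *ᵥ u) + γ * (w ⬝ᵥ w)
        + (2 * (v ⬝ᵥ (H *ᵥ v)) - v ⬝ᵥ (Fop P Qm f Z χ *ᵥ v)) + z ⬝ᵥ z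
        + 2 * (v ⬝ᵥ (AK *ᵥ (G *ᵥ u))) + 2 * (v ⬝ᵥ (EK *ᵥ w)) + 2 * (z ⬝ᵥ (CK *ᵥ (G *ᵥ u))) := by
    intro u v w z hne
    have := pd_pos h1 (x := Sum.elim (Sum.elim u w) (Sum.elim v z)) (by
      intro h0
      rcases hne with h | h | h
      · exact h (funext fun i => congrFun h0 (Sum.inl (Sum.inl i)))
      · exact h (funext fun i => congrFun h0 (Sum.inr (Sum.inl i)))
      · exact h (funext fun i => congrFun h0 (Sum.inl (Sum.inr i))))
    rw [hinf_expand] at this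
    simp only [add_mulVec, sub_mulVec, dotProduct_add, dotProduct_sub, quad_transpose,
      ← mulVec_mulVec] at this
    linarith
  have hG : ∀ u, u ≠ 0 → u ⬝ᵥ (G *ᵥ u) ≠ 0 := by
    intro u hu h0
    have := key u 0 0 0 (Or.inl hu)
    have h3 := pd_nonneg hX u
    simp only [h0, zero_dotProduct, mul_zero, mulVec_zero, dotProduct_zero] at this
    linarith
  have hH : ∀ u, u ≠ 0 → u ⬝ᵥ (H *ᵥ u) ≠ 0 := by
    intro u hu h0
    have := key 0 u 0 0 (Or.inr (Or.inl hu))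
    have h3 := hF0 u
    simp only [h0, zero_dotProduct, mul_zero, mulVec_zero, dotProduct_zero] at this
    linarith
  obtain ⟨u, hu⟩ := inj_of_pos hG x
  obtain ⟨v, hv⟩ := inj_of_pos hH (-(AK *ᵥ x + EK *ᵥ w))
  have hfin := key u v w (-(CK *ᵥ x)) (by
    by_contra hcon
    push Not at hcon
    apply hxw
    rw [← hu, hcon.1, hcon.2.2, mulVec_zero]
    rfl)
  have hy := young hX u x
  have hFv := hF v
  rw [hv] at hFv hfin
  simp only [mulVec_neg, neg_dotProduct, dotProduct_neg, neg_neg, dotProduct_add] at hFv hfin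
  rw [hu] at hfin
  have e3 : ∀ χ' : XT NN MM T,
      (AK *ᵥ x + EK *ᵥ w) ⬝ᵥ ((X χ')⁻¹ *ᵥ (AK *ᵥ x + EK *ᵥ w))
      = (AK *ᵥ x + EK *ᵥ w) ⬝ᵥ ((X χ')⁻¹ *ᵥ (AK *ᵥ x + EK *ᵥ w)) := fun _ => rfl
  linarith

open Classical in
lemma bar_of_lmi {NN MM T n m q ℓ : ℕ} [NeZero T]
    {P : Matrix (Fin NN) (Fin NN) ℝ} {Qm : Matrix (Fin MM) (Fin MM) ℝ}
    (hP0 : ∀ i j, 0 ≤ P i j) (hQ0 : ∀ i j, 0 ≤ Qm i j) {f : Fin MM → Bool}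
    {A : Fin NN → Matrix (Fin n) (Fin n) ℝ} {B : Fin NN → Matrix (Fin n) (Fin m) ℝ}
    {C : Fin NN → Matrix (Fin ℓ) (Fin n) ℝ} {D : Fin NN → Matrix (Fin ℓ) (Fin m) ℝ}
    {E : Fin NN → Matrix (Fin n) (Fin q) ℝ}
    {K : Fin NN → Fin T → Matrix (Fin m) (Fin n) ℝ} {γ : ℝ} (hγ : 0 < γ)
    {G H X : XT NN MM T → Matrix (Fin n) (Fin n) ℝ}
    {Z : XT NN MM T → XT NN MM T → Matrix (Fin n) (Fin n) ℝ}
    (h : ∀ χ χ' : XT NN MM T, inX f χ → inX f χ' →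
            (hinfBlock γ (G χ + (G χ)ᵀ - X χ) (H χ + (H χ)ᵀ - Fop P Qm f Z χ)
              (AKmat A B K χ * G χ) (E χ.1) (CKmat C D K χ * G χ)).PosDef ∧
            (Matrix.fromBlocks (Z χ χ') (H χ)ᵀ (H χ) (X χ')).PosDef) :
    MeanSquareStableBar P Qm f A B E K ∧ HinfSqLtBar P Qm f A B C D E K γ := by
  have hX : ∀ χ, inX f χ → (X χ).PosDef := fun χ hχ => block_X (h χ χ hχ hχ).2
  set W : XT NN MM T → Matrix (Fin n) (Fin n) ℝ := fun χ => if inX f χ then (X χ)⁻¹ else 0 with hW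
  have hWi : ∀ χ, inX f χ → W χ = (X χ)⁻¹ := fun χ hχ => if_pos hχ
  have hWpd : ∀ χ, inX f χ → (W χ).PosDef := fun χ hχ => by
    rw [hWi χ hχ]
    exact (hX χ hχ).inv
  set V : XT NN MM T → (Fin n → ℝ) → ℝ := fun χ x => x ⬝ᵥ (W χ *ᵥ x) with hVd
  have hV : ∀ χ x, 0 ≤ V χ x := by
    intro χ x
    by_cases hχ : inX f χ
    · exact pd_nonneg (hWpd χ hχ) x
    · simp [hVd, hW, hχ]
  have hV0 : ∀ χ, V χ 0 = 0 := by
    intro χ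
    simp [hVd]
  have hVc : ∀ χ, Continuous (V χ) := fun χ => quad_cont _
  have hVs : ∀ χ (t : ℝ) x, V χ (t • x) = t ^ 2 * V χ x := fun χ t x => quad_smul _ t x
  have hSc : ∀ d : ℕ, Continuous fun x : Fin d → ℝ => ∑ i, x i ^ 2 := fun d => by fun_prop
  have hSs : ∀ (d : ℕ) (t : ℝ) (x : Fin d → ℝ),
      ∑ i, (t • x) i ^ 2 = t ^ 2 * ∑ i, x i ^ 2 := by
    intro d t x
    rw [Finset.mul_sum]
    refine Finset.sum_congr rfl fun i _ => ?_
    rw [Pi.smul_apply, smul_eq_mul]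
    ring
  have hSp : ∀ (d : ℕ) (x : Fin d → ℝ), x ≠ 0 → 0 < ∑ i, x i ^ 2 := by
    intro d x hx
    obtain ⟨i, hi⟩ := Function.ne_iff.1 hx
    exact Finset.sum_pos' (fun i _ => sq_nonneg _) ⟨i, Finset.mem_univ _, by
      have : x i ≠ 0 := hi
      positivity⟩
  have hS0 : ∀ (d : ℕ) (x : Fin d → ℝ), 0 ≤ ∑ i, x i ^ 2 := fun d x =>
    Finset.sum_nonneg fun i _ => sq_nonneg _
  -- lower bound
  have h1 : ∃ c > 0, ∀ χ, inX f χ → ∀ x, c * ∑ i, x i ^ 2 ≤ V χ x := by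
    have : ∀ χ, ∃ e : ℝ, inX f χ → 0 < e ∧ ∀ x, e * ∑ i, x i ^ 2 ≤ V χ x := by
      intro χ
      by_cases hχ : inX f χ
      · obtain ⟨e, he, h⟩ := quad_dom (V χ) (fun x : Fin n → ℝ => ∑ i, x i ^ 2) (hVc χ) (hSc n)
          (hVs χ) (hSs n) (fun x hx => pd_pos (hWpd χ hχ) hx)
        exact ⟨e, fun _ => ⟨he, h⟩⟩
      · exact ⟨0, fun h => absurd h hχ⟩
    choose e he using this
    obtain ⟨ε, hε, hle⟩ := exists_unif (inX f) e fun χ hχ => (he χ hχ).1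
    exact ⟨ε, hε, fun χ hχ x => le_trans
      (mul_le_mul_of_nonneg_right (hle χ hχ) (hS0 n x)) ((he χ hχ).2 x)⟩
  -- upper bound
  have h2 : ∃ c > 0, ∀ χ, inX f χ → ∀ x, c * V χ x ≤ ∑ i, x i ^ 2 := by
    have : ∀ χ, ∃ e > 0, ∀ x, e * V χ x ≤ ∑ i, x i ^ 2 := fun χ =>
      quad_dom (fun x : Fin n → ℝ => ∑ i, x i ^ 2) (V χ) (hSc n) (hVc χ) (hSs n) (hVs χ) (hSp n)
    choose e he0 he using this
    obtain ⟨ε, hε, hle⟩ := exists_unif (inX f) e fun χ hχ => he0 χ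
    exact ⟨ε, hε, fun χ hχ x => le_trans
      (mul_le_mul_of_nonneg_right (hle χ hχ) (hV χ x)) (he χ x)⟩
  -- dissipation
  have h3 : ∃ ε > 0, ∀ χ, inX f χ → ∀ (x : Fin n → ℝ) (w : Fin q → ℝ),
      ∑ χ', pbar P Qm f χ χ' * V χ' ((AKmat A B K χ).mulVec x + (E χ.1).mulVec w)
        + ∑ i, ((CKmat C D K χ).mulVec x) i ^ 2 + ε * (V χ x + ∑ i, w i ^ 2)
        ≤ V χ x + γ * ∑ i, w i ^ 2 := by
    have : ∀ χ, ∃ e : ℝ, inX f χ → 0 < e ∧ ∀ p : (Fin n → ℝ) × (Fin q → ℝ),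
        e * (V χ p.1 + ∑ i, p.2 i ^ 2) ≤ V χ p.1 + γ * ∑ i, p.2 i ^ 2
          - ∑ i, ((CKmat C D K χ).mulVec p.1) i ^ 2
          - ∑ χ', pbar P Qm f χ χ' * V χ' ((AKmat A B K χ).mulVec p.1 + (E χ.1).mulVec p.2) := by
      intro χ
      by_cases hχ : inX f χ
      swap
      · exact ⟨0, fun h => absurd h hχ⟩
      obtain ⟨e, he, hh⟩ := quad_dom (F := (Fin n → ℝ) × (Fin q → ℝ))
        (fun p => V χ p.1 + γ * ∑ i, p.2 i ^ 2
          - ∑ i, ((CKmat C D K χ).mulVec p.1) i ^ 2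
          - ∑ χ', pbar P Qm f χ χ' * V χ' ((AKmat A B K χ).mulVec p.1 + (E χ.1).mulVec p.2))
        (fun p => V χ p.1 + ∑ i, p.2 i ^ 2)
        (by
          refine Continuous.sub (Continuous.sub (Continuous.add ((hVc χ).comp continuous_fst) ?_)
            ?_) ?_
          · exact continuous_const.mul ((hSc q).comp continuous_snd)
          · exact (hSc ℓ).comp (by fun_prop)
          · exact continuous_finset_sum _ fun χ' _ =>
              continuous_const.mul ((hVc χ').comp (by fun_prop)))
        (((hVc χ).comp continuous_fst).add ((hSc q).comp continuous_snd))
        (by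
          intro t p
          have e1 : ∀ χ', V χ' ((AKmat A B K χ) *ᵥ (t • p).1 + (E χ.1) *ᵥ (t • p).2)
              = t ^ 2 * V χ' ((AKmat A B K χ) *ᵥ p.1 + (E χ.1) *ᵥ p.2) := by
            intro χ'
            rw [Prod.smul_fst, Prod.smul_snd, mulVec_smul, mulVec_smul, ← smul_add, hVs]
          have e2 : ∑ i, ((CKmat C D K χ) *ᵥ (t • p).1) i ^ 2
              = t ^ 2 * ∑ i, ((CKmat C D K χ) *ᵥ p.1) i ^ 2 := by
            rw [Prod.smul_fst, mulVec_smul, hSs]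
          have e3 : ∑ χ', pbar P Qm f χ χ' * V χ' ((AKmat A B K χ) *ᵥ (t • p).1
                + (E χ.1) *ᵥ (t • p).2)
              = t ^ 2 * ∑ χ', pbar P Qm f χ χ' * V χ' ((AKmat A B K χ) *ᵥ p.1
                + (E χ.1) *ᵥ p.2) := by
            rw [Finset.mul_sum]
            refine Finset.sum_congr rfl fun χ' _ => ?_
            rw [e1]
            ring
          simp only [e2, e3]
          rw [Prod.smul_fst, Prod.smul_snd, hVs, hSs]
          ring)
        (by
          intro t p
          simp only [Prod.smul_fst, Prod.smul_snd, hVs, hSs]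
          ring)
        (by
          rintro ⟨x, w⟩ hxw
          have := lmi_ineq hP0 hQ0 (hX χ hχ) (h χ χ hχ hχ).1
            (fun χ' hχ' => (h χ χ' hχ hχ').2) x w hxw
          rw [dot_sq, dot_sq] at this
          have e4 : ∀ χ' : XT NN MM T, (if inX f χ' then
              (AKmat A B K χ *ᵥ x + E χ.1 *ᵥ w) ⬝ᵥ ((X χ')⁻¹ *ᵥ (AKmat A B K χ *ᵥ x + E χ.1 *ᵥ w))
              else 0) = V χ' (AKmat A B K χ *ᵥ x + E χ.1 *ᵥ w) := by
            intro χ'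
            by_cases hi : inX f χ'
            · simp only [hVd, hW, hi, if_true]
            · simp [hVd, hW, hi]
          simp only [e4] at this
          rw [← hWi χ hχ] at this
          exact this)
      exact ⟨e, fun _ => ⟨he, hh⟩⟩
    choose e he using this
    obtain ⟨ε, hε, hle⟩ := exists_unif (inX f) e fun χ hχ => (he χ hχ).1
    refine ⟨ε, hε, fun χ hχ x w => ?_⟩
    have a1 := (he χ hχ).2 (x, w)
    have a2 := mul_le_mul_of_nonneg_right (hle χ hχ) (add_nonneg (hV χ x) (hS0 q w))
    dsimp only at a1
    linarith
  obtain ⟨d1, hd1, h1⟩ := h1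
  obtain ⟨d2, hd2, h2⟩ := h2
  obtain ⟨ε0, hε0, h3⟩ := h3
  have hε : 0 < min ε0 (min 1 γ) := lt_min hε0 (lt_min one_pos hγ)
  have hL : ∀ χ, inX f χ → ∀ (x : Fin n → ℝ) (w : Fin q → ℝ),
      ∑ χ', pbar P Qm f χ χ' * V χ' ((AKmat A B K χ).mulVec x + (E χ.1).mulVec w)
        + ∑ i, ((CKmat C D K χ).mulVec x) i ^ 2 + min ε0 (min 1 γ) * (V χ x + ∑ i, w i ^ 2)
        ≤ V χ x + γ * ∑ i, w i ^ 2 := by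
    intro χ hχ x w
    have a1 := h3 χ hχ x w
    have a2 := mul_le_mul_of_nonneg_right (min_le_left ε0 (min 1 γ))
      (add_nonneg (hV χ x) (hS0 q w))
    linarith
  refine ⟨mss_of_lyap hP0 hQ0 hV hε ((min_le_right _ _).trans (min_le_left _ _))
    (inv_pos.2 hd1) (inv_pos.2 hd2) ?_ ?_ hL,
    hinf_of_lyap hP0 hQ0 hV hε ((min_le_right _ _).trans (min_le_right _ _)) hV0 hL⟩
  · intro χ hχ x
    rw [inv_mul_eq_div, le_div_iff₀ hd1, mul_comm]
    exact h1 χ hχ x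
  · intro χ hχ x
    rw [inv_mul_eq_div, le_div_iff₀ hd2, mul_comm]
    exact h2 χ hχ x

/-- (i) `Σ_K` MSS with `‖Σ_K‖∞² < γ` iff (ii) `Σ̄_K` MSS with
`‖Σ̄_K‖∞² < γ`; moreover the LMIs (iii) imply both (i) and (ii). -/
theorem hinf_characterization
    {NN MM T n m q ℓ : ℕ} [NeZero NN] [NeZero MM] [NeZero T]
    [NeZero n] [NeZero m] [NeZero q] [NeZero ℓ]
    (P : Matrix (Fin NN) (Fin NN) ℝ) (Qm : Matrix (Fin MM) (Fin MM) ℝ)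
    (hP0 : ∀ i j, 0 ≤ P i j) (hP1 : ∀ i, ∑ j, P i j = 1)
    (hQ0 : ∀ i j, 0 ≤ Qm i j) (hQ1 : ∀ i, ∑ j, Qm i j = 1)
    (f : Fin MM → Bool)
    (A : Fin NN → Matrix (Fin n) (Fin n) ℝ) (B : Fin NN → Matrix (Fin n) (Fin m) ℝ)
    (C : Fin NN → Matrix (Fin ℓ) (Fin n) ℝ) (D : Fin NN → Matrix (Fin ℓ) (Fin m) ℝ)
    (E : Fin NN → Matrix (Fin n) (Fin q) ℝ)
    (K : Fin NN → Fin T → Matrix (Fin m) (Fin n) ℝ)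
    (γ : ℝ) (hγ : 0 < γ) :
    ((MeanSquareStable P Qm f A B E K ∧ HinfSqLtSigma P Qm f A B C D E K γ)
      ↔ (MeanSquareStableBar P Qm f A B E K ∧ HinfSqLtBar P Qm f A B C D E K γ))
    ∧ ((∃ (G H X : XT NN MM T → Matrix (Fin n) (Fin n) ℝ)
          (Z : XT NN MM T → XT NN MM T → Matrix (Fin n) (Fin n) ℝ),
          ∀ χ χ' : XT NN MM T, inX f χ → inX f χ' →
            (hinfBlock γ (G χ + (G χ)ᵀ - X χ) (H χ + (H χ)ᵀ - Fop P Qm f Z χ)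
              (AKmat A B K χ * G χ) (E χ.1) (CKmat C D K χ * G χ)).PosDef ∧
            (Matrix.fromBlocks (Z χ χ') (H χ)ᵀ (H χ) (X χ')).PosDef) →
        ((MeanSquareStable P Qm f A B E K ∧ HinfSqLtSigma P Qm f A B C D E K γ)
          ∧ (MeanSquareStableBar P Qm f A B E K ∧ HinfSqLtBar P Qm f A B C D E K γ))) := by
  refine ⟨⟨fun h => ⟨bar_of_mss hP0 hP1 hQ0 hQ1 h.1, bar_of_hinf hP0 hP1 hQ0 hQ1 h.2⟩,
    fun h => ⟨mss_of_bar h.1, hinf_of_bar h.2⟩⟩, ?_⟩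
  rintro ⟨G, H, X, Z, h⟩
  have hb := bar_of_lmi hP0 hQ0 hγ h
  exact ⟨⟨mss_of_bar hb.1, hinf_of_bar hb.2⟩, hb⟩

end
end

section
/- Let R, Q, G, A be n×n real matrices with R symmetric and Q symmetric positive definite. If the symmetric block matrix [[R, A G],[GᵀAᵀ, G + Gᵀ − Q]] is positive definite, then G is invertible and R − A Q Aᵀ is positive definite. -/
open MeasureTheory ProbabilityTheory Matrix

noncomputable section

/-- if `[[R, A G],[GᵀAᵀ, G + Gᵀ − Q]] > 0` with `R` symmetric and `Q`
symmetric positive definite, then `G` is invertible and `R − A Q Aᵀ > 0`. -/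
theorem block_posdef_schur
    {n : ℕ} (R Q G A : Matrix (Fin n) (Fin n) ℝ)
    (hR : R.IsHermitian) (hQ : Q.PosDef)
    (h : (Matrix.fromBlocks R (A * G) (A * G)ᵀ (G + Gᵀ - Q)).PosDef) :
    IsUnit G ∧ (R - A * Q * Aᵀ).PosDef := by
  have hQs : Qᵀ = Q := by simpa using hQ.isHermitian.eq
  have h22 : (G + Gᵀ - Q).PosDef := h.submatrix (e := Sum.inr) Sum.inr_injective
  have hGG : (G + Gᵀ).PosDef := by
    have := h22.add hQ
    rwa [sub_add_cancel] at this
  have hG : IsUnit G := by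
    rw [← mulVec_injective_iff_isUnit]
    intro a b hab
    by_contra hne
    have hz : G *ᵥ (a - b) = 0 := by
      rw [mulVec_sub]
      exact sub_eq_zero.mpr hab
    have hp := hGG.dotProduct_mulVec_pos (sub_ne_zero.mpr hne)
    rw [add_mulVec, dotProduct_add, hz, star_trivial, dotProduct_mulVec _ Gᵀ,
      vecMul_transpose, hz] at hp
    simp at hp
  refine ⟨hG, ?_⟩
  have hdet : IsUnit G.det := (Matrix.isUnit_iff_isUnit_det G).mp hG
  obtain ⟨Y, hY⟩ : ∃ Y, G * Y = -(Q * Aᵀ) :=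
    ⟨G⁻¹ * -(Q * Aᵀ), Matrix.mul_nonsing_inv_cancel_left _ _ hdet⟩
  have hYt : Yᵀ * Gᵀ = -(A * Q) := by
    rw [← transpose_mul, hY]
    simp [transpose_mul, hQs]
  have hinj : Function.Injective (fromRows (1 : Matrix (Fin n) (Fin n) ℝ) Y).mulVec := by
    intro a b hab
    simp only [fromRows_mulVec, one_mulVec] at hab
    exact (Sum.elim_eq_iff.1 hab).1
  have h1 := h.conjTranspose_mul_mul_same hinj
  have h2 := hQ.posSemidef.conjTranspose_mul_mul_same (Aᵀ + Y)
  have h3 := h1.add_posSemidef h2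
  convert h3 using 1
  rw [conjTranspose_fromRows_eq_fromCols_conjTranspose]
  simp only [fromCols_mul_fromBlocks,
    fromCols_mul_fromRows, conjTranspose_eq_transpose_of_trivial, transpose_one, transpose_add,
    transpose_transpose, transpose_mul]
  have e1 : A * G * Y = -(A * Q * Aᵀ) := by
    rw [Matrix.mul_assoc, hY]; noncomm_ring
  have e2 : Yᵀ * (Gᵀ * Aᵀ) = -(A * Q * Aᵀ) := by
    rw [← Matrix.mul_assoc, hYt]; noncomm_ring
  have e3 : Yᵀ * G * Y = -(Yᵀ * Q * Aᵀ) := by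
    rw [Matrix.mul_assoc, hY]; noncomm_ring
  have e4 : Yᵀ * Gᵀ * Y = -(A * Q * Y) := by
    rw [hYt]; noncomm_ring
  simp only [Matrix.mul_add, Matrix.add_mul, Matrix.mul_sub, Matrix.sub_mul, Matrix.one_mul,
    Matrix.mul_one, e1, e2, e3, e4]
  abel

end
end

section
/- Call a pair (γ,δ) ∈ [N]×[T] admissible if (α,β,γ,δ) ∈ 𝔛 for some α ∈ [N], β ∈ [M]. Suppose matrices R_χ ∈ ℝ^{n×n} (symmetric, for χ ∈ 𝔛), G_{γ,δ} ∈ ℝ^{n×n}, and F_{γ,δ} ∈ ℝ^{m×n} (for (γ,δ) ∈ [N]×[T]) satisfy, for every χ = (α,β,γ,δ) ∈ 𝔛, the positive definiteness of the symmetric block matrix [[R_χ, A_α G_{γ,δ} + B_α F_{γ,δ}],[(A_α G_{γ,δ} + B_α F_{γ,δ})ᵀ, G_{γ,δ} + G_{γ,δ}ᵀ − D̄_χ(R)]]. Then G_{γ,δ} is invertible for every admissible (γ,δ), and if the feedback gains satisfy K_{γ,δ} = F_{γ,δ} G_{γ,δ}⁻¹ for every admissible (γ,δ), then there exist symmetric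 positive definite matrices Q_χ ∈ ℝ^{n×n} (χ ∈ 𝔛) such that Q_χ − D̄_χ(A_K Q A_Kᵀ) is positive definite for every χ ∈ 𝔛, where (A_K Q A_Kᵀ)_χ = A_{K,χ} Q_χ A_{K,χ}ᵀ. -/
open MeasureTheory ProbabilityTheory Matrix

noncomputable section

/-- Quadratic-form expansion of a positive definite block matrix. -/
lemma block_quad_pos {n : ℕ} {R W S : Matrix (Fin n) (Fin n) ℝ}
    (h : (Matrix.fromBlocks R W Wᵀ S).PosDef) (x y : Fin n → ℝ) (hxy : x ≠ 0 ∨ y ≠ 0) :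
    0 < x ⬝ᵥ R *ᵥ x + 2 * (x ⬝ᵥ W *ᵥ y) + y ⬝ᵥ S *ᵥ y := by
  have hne : Sum.elim x y ≠ 0 := by
    intro h0
    rcases hxy with hx | hy
    · exact hx (funext fun i => by simpa using congrFun h0 (Sum.inl i))
    · exact hy (funext fun i => by simpa using congrFun h0 (Sum.inr i))
  have h1 := h.dotProduct_mulVec_pos hne
  have h2 : y ⬝ᵥ Wᵀ *ᵥ x = x ⬝ᵥ W *ᵥ y := by
    rw [Matrix.mulVec_transpose, dotProduct_comm, Matrix.dotProduct_mulVec]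
  simp only [star_trivial, Matrix.fromBlocks_mulVec, Sum.elim_comp_inl, Sum.elim_comp_inr,
    sumElim_dotProduct_sumElim, dotProduct_add, h2] at h1
  linarith

/-- A positive definite matrix dominates small multiples of any matrix, as quadratic forms. -/
lemma exists_small {n : ℕ} {M N : Matrix (Fin n) (Fin n) ℝ} (hM : M.PosDef) :
    ∃ ε : ℝ, 0 < ε ∧ ∀ x : Fin n → ℝ, ε * (x ⬝ᵥ N *ᵥ x) ≤ x ⬝ᵥ M *ᵥ x := by
  have hc : ∀ M : Matrix (Fin n) (Fin n) ℝ, Continuous fun x : Fin n → ℝ => x ⬝ᵥ M *ᵥ x := by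
    intro M
    exact continuous_id.dotProduct (Continuous.matrix_mulVec continuous_const continuous_id)
  have hK : IsCompact (Metric.sphere (0 : Fin n → ℝ) 1) := isCompact_sphere _ _
  obtain ⟨c, hc0, hcM⟩ := hK.exists_forall_le' (hc M).continuousOn (a := 0) (by
    intro x hx
    have hx0 : x ≠ 0 := by
      rintro rfl
      simp at hx
    simpa using hM.dotProduct_mulVec_pos hx0)
  obtain ⟨C, hC⟩ := hK.exists_bound_of_continuousOn (hc N).continuousOn
  have hC1 : 0 < |C| + 1 := by positivity
  refine ⟨c / (|C| + 1), by positivity, fun x => ?_⟩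
  by_cases hx : x = 0
  · simp [hx]
  have hn : 0 < ‖x‖ := norm_pos_iff.mpr hx
  set u : Fin n → ℝ := ‖x‖⁻¹ • x with hu
  have hus : u ∈ Metric.sphere (0 : Fin n → ℝ) 1 := by
    simp [hu, norm_smul, hn.ne']
  have hxu : x = ‖x‖ • u := by
    rw [hu, smul_smul, mul_inv_cancel₀ hn.ne', one_smul]
  have hq : ∀ M : Matrix (Fin n) (Fin n) ℝ, x ⬝ᵥ M *ᵥ x = ‖x‖ ^ 2 * (u ⬝ᵥ M *ᵥ u) := by
    intro M
    conv_lhs => rw [hxu]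
    simp only [Matrix.mulVec_smul, smul_dotProduct, dotProduct_smul, smul_eq_mul]
    ring
  have h1 := hcM u hus
  have h2 : u ⬝ᵥ N *ᵥ u ≤ |C| + 1 := by
    have := hC u hus
    rw [Real.norm_eq_abs] at this
    have h3 := le_abs_self (u ⬝ᵥ N *ᵥ u)
    have h4 := le_abs_self C
    linarith
  have h3 : c / (|C| + 1) * (u ⬝ᵥ N *ᵥ u) ≤ c := by
    rw [div_mul_eq_mul_div, div_le_iff₀ hC1]
    exact mul_le_mul_of_nonneg_left h2 hc0.le
  rw [hq N, hq M]
  have := mul_le_mul_of_nonneg_left (h3.trans h1) (sq_nonneg ‖x‖)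
  linarith

lemma Dop_posSemidef {NN MM T n : ℕ} [NeZero T] {P : Matrix (Fin NN) (Fin NN) ℝ}
    {Q : Matrix (Fin MM) (Fin MM) ℝ} (hP0 : ∀ i j, 0 ≤ P i j) (hQ0 : ∀ i j, 0 ≤ Q i j)
    (f : Fin MM → Bool) (R : XT NN MM T → Matrix (Fin n) (Fin n) ℝ)
    (hR : ∀ χ, inX f χ → (R χ).PosSemidef) (χ : XT NN MM T) :
    (Dop P Q f R χ).PosSemidef := by
  unfold Dop
  refine Matrix.posSemidef_sum _ fun χ' _ => ?_
  split_ifs with h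
  · exact (hR χ' h).smul (pbar_nonneg hP0 hQ0 f χ' χ)
  · exact Matrix.PosSemidef.zero

lemma Dop_sub {NN MM T n : ℕ} [NeZero T] (P : Matrix (Fin NN) (Fin NN) ℝ)
    (Q : Matrix (Fin MM) (Fin MM) ℝ) (f : Fin MM → Bool)
    (R S : XT NN MM T → Matrix (Fin n) (Fin n) ℝ) (χ : XT NN MM T) :
    Dop P Q f (fun χ' => R χ' - S χ') χ = Dop P Q f R χ - Dop P Q f S χ := by
  unfold Dop
  rw [← Finset.sum_sub_distrib]
  refine Finset.sum_congr rfl fun χ' _ => ?_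
  split_ifs
  · rw [smul_sub]
  · simp

/-- the stabilization LMIs imply invertibility of the `G_{γ,δ}` and,
for `K_{γ,δ} = F_{γ,δ} G_{γ,δ}⁻¹`, the existence of positive definite `Q_χ` with
`Q_χ - D̄_χ(A_K Q A_Kᵀ) > 0` for all `χ ∈ 𝔛`. -/
theorem stabilization_lmi_matrix
    {NN MM T n m : ℕ} [NeZero NN] [NeZero MM] [NeZero T] [NeZero n] [NeZero m]
    (P : Matrix (Fin NN) (Fin NN) ℝ) (Qm : Matrix (Fin MM) (Fin MM) ℝ)
    (hP0 : ∀ i j, 0 ≤ P i j) (hP1 : ∀ i, ∑ j, P i j = 1)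
    (hQ0 : ∀ i j, 0 ≤ Qm i j) (hQ1 : ∀ i, ∑ j, Qm i j = 1)
    (f : Fin MM → Bool)
    (A : Fin NN → Matrix (Fin n) (Fin n) ℝ) (B : Fin NN → Matrix (Fin n) (Fin m) ℝ)
    (R : XT NN MM T → Matrix (Fin n) (Fin n) ℝ)
    (hRsym : ∀ χ, inX f χ → (R χ).IsHermitian)
    (G : Fin NN → Fin T → Matrix (Fin n) (Fin n) ℝ)
    (F : Fin NN → Fin T → Matrix (Fin m) (Fin n) ℝ)
    (hLMI : ∀ χ : XT NN MM T, inX f χ →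
      (Matrix.fromBlocks (R χ)
        (A χ.1 * G χ.2.2.1 χ.2.2.2 + B χ.1 * F χ.2.2.1 χ.2.2.2)
        (A χ.1 * G χ.2.2.1 χ.2.2.2 + B χ.1 * F χ.2.2.1 χ.2.2.2)ᵀ
        (G χ.2.2.1 χ.2.2.2 + (G χ.2.2.1 χ.2.2.2)ᵀ - Dop P Qm f R χ)).PosDef) :
    (∀ g d, Admissible f g d → IsUnit (G g d)) ∧
    ∀ K : Fin NN → Fin T → Matrix (Fin m) (Fin n) ℝ,
      (∀ g d, Admissible f g d → K g d = F g d * (G g d)⁻¹) →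
      ∃ Qmat : XT NN MM T → Matrix (Fin n) (Fin n) ℝ,
        (∀ χ, inX f χ → (Qmat χ).PosDef) ∧
        ∀ χ, inX f χ →
          (Qmat χ - Dop P Qm f
            (fun χ' => AKmat A B K χ' * Qmat χ' * (AKmat A B K χ')ᵀ) χ).PosDef := by

  classical
  have hR : ∀ χ, inX f χ → (R χ).PosDef := by
    intro χ hχ
    refine Matrix.PosDef.of_dotProduct_mulVec_pos (hRsym χ hχ) fun x hx => ?_
    have := block_quad_pos (hLMI χ hχ) x 0 (Or.inl hx)
    simpa using this
  have hD : ∀ χ, (Dop P Qm f R χ).PosSemidef :=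
    Dop_posSemidef hP0 hQ0 f R fun χ h => (hR χ h).posSemidef
  have hGu : ∀ g d, Admissible f g d → IsUnit (G g d) := by
    rintro g d ⟨α, β, hχ⟩
    rw [← Matrix.mulVec_injective_iff_isUnit]
    rw [← Matrix.coe_mulVecLin, ← LinearMap.ker_eq_bot, LinearMap.ker_eq_bot']
    intro y hy
    rw [Matrix.mulVecLin_apply] at hy
    by_contra hy0
    have h1 := block_quad_pos (hLMI _ hχ) 0 y (Or.inr hy0)
    have h2 := (hD (α, β, g, d)).dotProduct_mulVec_nonneg y
    have h3 : y ⬝ᵥ (G g d)ᵀ *ᵥ y = y ⬝ᵥ G g d *ᵥ y := by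
      rw [Matrix.mulVec_transpose, dotProduct_comm, Matrix.dotProduct_mulVec]
    simp only [Matrix.sub_mulVec, Matrix.add_mulVec, dotProduct_sub, dotProduct_add, h3, hy,
      star_trivial, zero_dotProduct, dotProduct_zero] at h1 h2
    linarith
  refine ⟨hGu, fun K hK => ?_⟩
  set L : XT NN MM T → Matrix (Fin n) (Fin n) ℝ := AKmat A B K with hL
  have hLG : ∀ χ : XT NN MM T, inX f χ →
      A χ.1 * G χ.2.2.1 χ.2.2.2 + B χ.1 * F χ.2.2.1 χ.2.2.2 = L χ * G χ.2.2.1 χ.2.2.2 := by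
    intro χ hχ
    have had : Admissible f χ.2.2.1 χ.2.2.2 := ⟨χ.1, χ.2.1, hχ⟩
    have hu := (Matrix.isUnit_iff_isUnit_det _).mp (hGu _ _ had)
    rw [hL, AKmat, hK _ _ had, Matrix.add_mul, Matrix.mul_assoc, Matrix.mul_assoc,
      Matrix.nonsing_inv_mul _ hu, Matrix.mul_one]
  have hquad : ∀ (Lm S : Matrix (Fin n) (Fin n) ℝ) (x : Fin n → ℝ),
      x ⬝ᵥ (Lm * S * Lmᵀ) *ᵥ x = (Lmᵀ *ᵥ x) ⬝ᵥ S *ᵥ (Lmᵀ *ᵥ x) := by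
    intro Lm S x
    rw [Matrix.mul_assoc, ← Matrix.mulVec_mulVec, ← Matrix.mulVec_mulVec,
      Matrix.dotProduct_mulVec, Matrix.mulVec_transpose]
  have hgap : ∀ χ, inX f χ → (R χ - L χ * Dop P Qm f R χ * (L χ)ᵀ).PosDef := by
    intro χ hχ
    refine Matrix.PosDef.of_dotProduct_mulVec_pos ?_ fun x hx => ?_
    · exact (hRsym χ hχ).sub
        (by simpa using ((hD χ).mul_mul_conjTranspose_same (L χ)).isHermitian)
    · have h1 := block_quad_pos (hLMI χ hχ) x (-((L χ)ᵀ *ᵥ x)) (Or.inl hx)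
      rw [hLG χ hχ] at h1
      set z := (L χ)ᵀ *ᵥ x with hz
      set G' := G χ.2.2.1 χ.2.2.2
      have h3 : z ⬝ᵥ G'ᵀ *ᵥ z = z ⬝ᵥ G' *ᵥ z := by
        rw [Matrix.mulVec_transpose G' z, dotProduct_comm, Matrix.dotProduct_mulVec z G' z]
      have h4 : x ⬝ᵥ (L χ * G') *ᵥ z = z ⬝ᵥ G' *ᵥ z := by
        rw [← Matrix.mulVec_mulVec, Matrix.dotProduct_mulVec x, ← Matrix.mulVec_transpose (L χ) x]
      simp only [Matrix.sub_mulVec, Matrix.add_mulVec, dotProduct_sub, dotProduct_add, h3, h4,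
        Matrix.mulVec_neg, dotProduct_neg, neg_dotProduct] at h1
      rw [star_trivial, Matrix.sub_mulVec, dotProduct_sub, hquad]
      linarith
  have hLL : ∀ χ, (L χ * (L χ)ᵀ).PosSemidef := fun χ => by
    simpa using Matrix.posSemidef_self_mul_conjTranspose (L χ)
  have hε : ∃ ε : ℝ, 0 < ε ∧ ∀ χ, inX f χ →
      (R χ - L χ * Dop P Qm f R χ * (L χ)ᵀ - ε • (L χ * (L χ)ᵀ)).PosSemidef := by
    have hev : ∀ᶠ ε : ℝ in nhdsWithin 0 (Set.Ioi 0), ∀ χ, inX f χ →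
        (R χ - L χ * Dop P Qm f R χ * (L χ)ᵀ - ε • (L χ * (L χ)ᵀ)).PosSemidef := by
      rw [Filter.eventually_all]
      intro χ
      by_cases hχ : inX f χ
      swap
      · exact Filter.Eventually.of_forall fun _ h => absurd h hχ
      obtain ⟨ε₀, h0, hb⟩ := exists_small (N := L χ * (L χ)ᵀ) (hgap χ hχ)
      filter_upwards [Ioc_mem_nhdsGT h0] with ε hε _
      refine Matrix.PosSemidef.of_dotProduct_mulVec_nonneg ?_ fun x => ?_
      · exact (hgap χ hχ).isHermitian.sub ((hLL χ).smul hε.1.le).isHermitian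
      · have h1 := hb x
        have h2 := (hLL χ).dotProduct_mulVec_nonneg x
        rw [star_trivial] at h2
        rw [star_trivial, Matrix.sub_mulVec, dotProduct_sub, Matrix.smul_mulVec,
          dotProduct_smul, smul_eq_mul]
        have := mul_le_mul_of_nonneg_right hε.2 h2
        linarith
    obtain ⟨ε, h1, h2⟩ := (hev.and self_mem_nhdsWithin).exists
    exact ⟨ε, h2, h1⟩
  obtain ⟨ε, hε0, hε⟩ := hε
  have hI : (ε • (1 : Matrix (Fin n) (Fin n) ℝ)).PosDef := Matrix.PosDef.one.smul hε0
  refine ⟨fun χ => Dop P Qm f R χ + ε • 1, fun χ _ => hI.posSemidef_add (hD χ), fun χ _ => ?_⟩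
  have key : Dop P Qm f R χ + ε • (1 : Matrix (Fin n) (Fin n) ℝ) - Dop P Qm f
      (fun χ' => L χ' * (Dop P Qm f R χ' + ε • 1) * (L χ')ᵀ) χ
      = Dop P Qm f (fun χ' => R χ' - L χ' * Dop P Qm f R χ' * (L χ')ᵀ
          - ε • (L χ' * (L χ')ᵀ)) χ + ε • 1 := by
    have : (fun χ' => R χ' - L χ' * Dop P Qm f R χ' * (L χ')ᵀ - ε • (L χ' * (L χ')ᵀ))
        = fun χ' => R χ' - L χ' * (Dop P Qm f R χ' + ε • 1) * (L χ')ᵀ := by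
      funext χ'
      simp [Matrix.mul_add, Matrix.add_mul, sub_sub]
    rw [this, Dop_sub]
    abel
  rw [key]
  exact hI.posSemidef_add (Dop_posSemidef hP0 hQ0 f _ hε χ)

end
end
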